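/- arXiv:1907.00885 — 2 statements merged into one kernel-verified Lean document; each statement's English description precedes it below -/
import Mathlib

section
/- Let d ≥ 1, r ≥ 0 and let 𝒜 = {A_1, …, A_n} be a family of n convex sets in ℝ^d such that every d+r+1 members of 𝒜 have empty intersection. Then for every k with d ≤ k ≤ d+r−1 one has f_k(𝒜) ≤ Σ_{j=k}^{d+r-1} C(j−d, k−d) · C(n−j+d−1, d). -/
/-- `fNum A k` is `f_k(𝒜)`: the number of subsets `σ` of the index set with
`|σ| = k+1` such that `⋂ i ∈ σ, A i` is nonempty. -/
noncomputable def fNum {α : Type*} {n : ℕ} (A : Fin n → Set α) (k : ℕ) : ℕ :=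
  Nat.card {σ : Finset (Fin n) // σ.card = k + 1 ∧ (⋂ i ∈ σ, A i).Nonempty}

/-!
Shrinking the members to convex hulls of finitely many witnesses makes them compact without changing
which of them intersect; thickening them slightly, with generic radii, makes the distance `v σ` from
the origin to `⋂ i ∈ σ, A i` a nondegenerate objective, still without changing the intersection
pattern. Strict convexity of the ball and Helly's theorem then show that the faces with a given
value of `v` form an interval `[m, M]` in the face poset with `|m| ≤ d`. Removing the `d`-element
faces in order of decreasing value, and colexicographically within each interval, is a `d`-collapse
of the complex of intersecting subfamilies (Wegner).

Every face with at least `d` elements lies between some `d`-element face `σ` and the facet `τ σ`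
through `σ` at the moment of its removal. The pairs `(σ, (τ σ)ᶜ)` satisfy the hypotheses of the skew
Bollobás theorem, which bounds the number of `σ` whose facet has more than `j` elements. The skew
theorem is proved by the polynomial method: the first sets of the pairs become points and the second
ones products of linear forms, taken from the moment curve so that a form of the second set vanishes
at the point of the first exactly when the two sets meet.
-/

open Finset Module

section Bollobas

open MvPolynomial in
lemma finrank_homogeneousSubmodule (σ R : Type*) [Fintype σ] [CommRing R] [Nontrivial R] (b : ℕ) :
    finrank R (homogeneousSubmodule σ R b) = (Fintype.card σ + b - 1).choose b := by
  classical
  have hmonomials : {m : σ →₀ ℕ | m.degree = b} = ↑((univ : Finset σ).finsuppAntidiag b) := by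
    ext m
    simp [Finsupp.degree_eq_sum]
  calc finrank R (homogeneousSubmodule σ R b)
      = finrank R (restrictSupport R {m : σ →₀ ℕ | m.degree = b}) := by
        rw [homogeneousSubmodule_eq_finsupp_supported, restrictSupport]
    _ = Nat.card {m : σ →₀ ℕ | m.degree = b} :=
        finrank_eq_nat_card_basis (basisRestrictSupport R _)
    _ = (Fintype.card σ + b - 1).choose b := by
        rw [hmonomials, Nat.card_coe_set_eq, Set.ncard_coe_finset,
          card_finsuppAntidiag_nat_eq_choose, card_univ]

lemma linearIndependent_of_dual_triangular {R W I κ : Type*} [CommRing R] [NoZeroDivisors R]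
    [AddCommGroup W] [Module R W] [Preorder κ] {f : I → W} (φ : I → Dual R W) (key : I → κ)
    (hdiag : ∀ i, φ i (f i) ≠ 0)
    (htri : ∀ i j, i ≠ j → φ i (f j) ≠ 0 → key j < key i) : LinearIndependent R f := by
  classical
  rw [linearIndependent_iff']
  intro s g hg
  by_contra! hne
  obtain ⟨i₀, hi₀⟩ := hne
  obtain ⟨i, hi, hmin⟩ := (s.filter (g · ≠ 0)).exists_minimalFor key ⟨i₀, by simpa using hi₀⟩
  simp only [mem_filter] at hi hmin
  have hsum : ∑ j ∈ s, g j * φ i (f j) = g i * φ i (f i) := by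
    refine Finset.sum_eq_single_of_mem i hi.1 fun j hj hji => ?_
    by_contra hterm
    have hlt := htri i j hji.symm (right_ne_zero_of_mul hterm)
    exact hlt.not_ge (hmin ⟨hj, left_ne_zero_of_mul hterm⟩ hlt.le)
  refine mul_ne_zero hi.2 (hdiag i) ?_
  simpa [hsum] using congrArg (φ i) hg

/-- The linear form `∑ l, x ^ l * X l`, with coefficients on the moment curve. At the coefficient
vector of a univariate polynomial it takes the value of that polynomial at `x`. -/
noncomputable def momentForm {R : Type*} [CommSemiring R] (a : ℕ) (x : R) :
    MvPolynomial (Fin (a + 1)) R :=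
  ∑ l : Fin (a + 1), MvPolynomial.C (x ^ (l : ℕ)) * MvPolynomial.X l

lemma isHomogeneous_momentForm {R : Type*} [CommSemiring R] (a : ℕ) (x : R) :
    (momentForm a x).IsHomogeneous 1 :=
  MvPolynomial.IsHomogeneous.sum _ _ _ fun _ _ => MvPolynomial.isHomogeneous_C_mul_X _ _

open Polynomial in
lemma exists_eval_momentForm_eq_prod {R V : Type*} [CommRing R] [Nontrivial R] (A : Finset V)
    (x : V → R) :
    ∃ u : Fin (#A + 1) → R, u (Fin.last #A) = 1 ∧
      ∀ y, MvPolynomial.eval u (momentForm #A y) = ∏ v ∈ A, (y - x v) := by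
  set p : R[X] := ∏ v ∈ A, (X - C (x v)) with hp
  have hmonic : p.Monic := monic_prod_X_sub_C x A
  have hdeg : p.natDegree = #A := natDegree_finsetProd_X_sub_C_eq_card A x
  refine ⟨fun l => p.coeff l, by simpa [hdeg] using hmonic.coeff_natDegree, fun y => ?_⟩
  calc MvPolynomial.eval (fun l : Fin (#A + 1) => p.coeff l) (momentForm #A y)
      = ∑ l : Fin (#A + 1), p.coeff l * y ^ (l : ℕ) := by simp [momentForm, mul_comm]
    _ = p.eval y := by
        rw [eval_eq_sum_range, hdeg, Fin.sum_univ_eq_sum_range fun l => p.coeff l * y ^ l]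
    _ = ∏ v ∈ A, (y - x v) := by simp [hp, eval_prod]

open MvPolynomial in
theorem card_le_choose_of_skew {I V κ : Type*} [Fintype I] [Preorder κ] {a b : ℕ}
    {A B : I → Finset V} (key : I → κ) (hA : ∀ i, #(A i) = a) (hB : ∀ i, #(B i) ≤ b)
    (hdisj : ∀ i, Disjoint (A i) (B i))
    (hskew : ∀ i j, i ≠ j → Disjoint (A i) (B j) → key j < key i) :
    Fintype.card I ≤ (a + b).choose a := by
  classical
  obtain ⟨φ, hφ⟩ := Set.countable_iff_exists_injOn.mp
    (univ.biUnion fun i => A i ∪ B i).countable_toSet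
  have hmem : ∀ i, ∀ v ∈ A i ∪ B i, v ∈ univ.biUnion fun i => A i ∪ B i :=
    fun i v hv => mem_biUnion.mpr ⟨i, mem_univ i, hv⟩
  have hvec : ∀ i, ∃ u : Fin (a + 1) → ℚ, u (Fin.last a) = 1 ∧
      ∀ y, eval u (momentForm a y) = ∏ v ∈ A i, (y - φ v) := fun i => by
    obtain rfl := hA i
    exact exists_eval_momentForm_eq_prod (A i) fun v => (φ v : ℚ)
  choose u hu_last hu using hvec
  let f : I → MvPolynomial (Fin (a + 1)) ℚ := fun i =>
    X (Fin.last a) ^ (b - #(B i)) * ∏ x ∈ B i, momentForm a (φ x : ℚ)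
  have hf : ∀ i, f i ∈ homogeneousSubmodule (Fin (a + 1)) ℚ b := fun i => by
    have hprod := (isHomogeneous_X_pow (R := ℚ) (Fin.last a) (b - #(B i))).mul
      (IsHomogeneous.prod (B i) (fun x => momentForm a (φ x : ℚ)) (fun _ => 1)
        fun x _ => isHomogeneous_momentForm a _)
    simpa [Nat.sub_add_cancel (hB i)] using hprod
  have heval : ∀ i j, eval (u i) (f j) ≠ 0 ↔ Disjoint (A i) (B j) := fun i j => by
    simp only [f, map_mul, map_pow, eval_X, hu_last, one_pow, one_mul, map_prod, hu,
      Finset.prod_ne_zero_iff, sub_ne_zero, ne_eq, Nat.cast_inj, Finset.disjoint_right]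
    refine forall₂_congr fun x hx => ⟨fun h hxA => h x hxA rfl, fun hxA v hv hxv => hxA ?_⟩
    rwa [hφ (hmem j x (mem_union_right _ hx)) (hmem i v (mem_union_left _ hv)) hxv]
  have hli : LinearIndependent ℚ f :=
    linearIndependent_of_dual_triangular (fun i => (aeval (u i)).toLinearMap) key
      (fun i => by simpa [aeval_eq_eval] using (heval i i).mpr (hdisj i))
      (fun i j hij h => hskew i j hij <| (heval i j).mp <| by simpa [aeval_eq_eval] using h)
  have : FiniteDimensional ℚ (homogeneousSubmodule (Fin (a + 1)) ℚ b) :=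
    Module.Finite.of_fg (homogeneousSubmodule_fg _ _ b)
  calc Fintype.card I
      = finrank ℚ (Submodule.span ℚ (Set.range f)) := (finrank_span_eq_card hli).symm
    _ ≤ finrank ℚ (homogeneousSubmodule (Fin (a + 1)) ℚ b) :=
        Submodule.finrank_mono (Submodule.span_le.mpr (Set.range_subset_iff.mpr hf))
    _ = (a + b).choose a := by
        rw [finrank_homogeneousSubmodule, Fintype.card_fin, Nat.add_right_comm,
          Nat.add_sub_cancel, Nat.choose_symm_add]

end Bollobas

section Collapse

variable {ι κ : Type*}

/-- The simplicial complex of all index sets whose members of the family `A` have a common point,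
with the empty face included when the ambient type is nonempty. -/
def nerve {α : Type*} (A : ι → Set α) : Set (Finset ι) :=
  {σ | (⋂ i ∈ σ, A i).Nonempty}

/-- A `d`-collapse of the complex `Δ`, recorded on the faces `σ` with `d` elements: they are
removed in increasing order of `key σ`, and `τ σ` is the unique facet through `σ` at the moment
when `σ` is removed together with all faces between `σ` and `τ σ`. -/
structure IsCollapse [Preorder κ] (Δ : Set (Finset ι)) (d : ℕ) (τ : Finset ι → Finset ι)
    (key : Finset ι → κ) : Prop where
  subset_facet : ∀ σ ∈ Δ, #σ = d → σ ⊆ τ σ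
  facet_mem : ∀ σ ∈ Δ, #σ = d → τ σ ∈ Δ
  exists_subset_facet : ∀ ρ ∈ Δ, d ≤ #ρ → ∃ σ ∈ Δ, #σ = d ∧ σ ⊆ ρ ∧ ρ ⊆ τ σ
  key_lt : ∀ σ ∈ Δ, ∀ σ' ∈ Δ, #σ = d → #σ' = d → σ ≠ σ' → σ ⊆ τ σ' → key σ' < key σ

lemma card_filter_Icc_le_choose [DecidableEq ι] {σ τ : Finset ι} (h : σ ⊆ τ) (k : ℕ) :
    #{ρ ∈ Finset.Icc σ τ | #ρ = k} ≤ (#τ - #σ).choose (k - #σ) := by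
  rw [← card_sdiff_of_subset h, ← card_powersetCard]
  refine card_le_card_of_injOn (· \ σ) (fun ρ hρ => ?_) fun ρ hρ ρ' hρ' heq => ?_
  · simp only [coe_filter, Finset.mem_Icc, Set.mem_ofPred_eq] at hρ
    rw [mem_coe, mem_powersetCard, card_sdiff_of_subset hρ.1.1, hρ.2]
    exact ⟨sdiff_subset_sdiff hρ.1.2 subset_rfl, rfl⟩
  · simp only [coe_filter, Finset.mem_Icc, Set.mem_ofPred_eq] at hρ hρ'
    rw [← sdiff_union_of_subset hρ.1.1, ← sdiff_union_of_subset hρ'.1.1]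
    exact congrArg (· ∪ σ) heq

lemma choose_sub_eq_sum_Ico {d k : ℕ} (hk : d ≤ k) (t : ℕ) :
    (t - d).choose (k + 1 - d) = ∑ j ∈ Finset.Ico k t, (j - d).choose (k - d) := by
  rcases lt_or_ge t k with htk | hkt
  · rw [Finset.Ico_eq_empty_of_le htk.le, sum_empty, Nat.choose_eq_zero_of_lt (by omega)]
  induction t, hkt using Nat.le_induction with
  | base => rw [Finset.Ico_self, sum_empty, Nat.choose_eq_zero_of_lt (by omega)]
  | succ t hkt ih =>
    rw [sum_Ico_succ_top hkt, ← ih, Nat.succ_sub (hk.trans hkt), Nat.succ_sub hk,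
      Nat.choose_succ_succ, add_comm]

variable [Fintype ι] [Preorder κ] {Δ : Set (Finset ι)} {d : ℕ} {τ : Finset ι → Finset ι}
  {key : Finset ι → κ}

namespace IsCollapse

open Classical in
lemma ncard_faces_le_sum (h : IsCollapse Δ d τ key) {k : ℕ} (hk : d ≤ k) :
    {ρ | #ρ = k + 1 ∧ ρ ∈ Δ}.ncard ≤
      ∑ σ with σ ∈ Δ ∧ #σ = d, (#(τ σ) - d).choose (k + 1 - d) := by
  have hcover : {ρ | #ρ = k + 1 ∧ ρ ∈ Δ} ⊆ (({σ | σ ∈ Δ ∧ #σ = d} : Finset (Finset ι)).biUnion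
      fun σ => {ρ ∈ Finset.Icc σ (τ σ) | #ρ = k + 1} : Finset (Finset ι)) := fun ρ hρ => by
    obtain ⟨σ, hσ, hσd, hσρ, hρτ⟩ := h.exists_subset_facet ρ hρ.2 (by have := hρ.1; omega)
    exact mem_coe.mpr <| mem_biUnion.mpr ⟨σ, (mem_filter_univ σ).mpr ⟨hσ, hσd⟩,
      mem_filter.mpr ⟨Finset.mem_Icc.mpr ⟨hσρ, hρτ⟩, hρ.1⟩⟩
  refine (Set.ncard_le_ncard hcover).trans ?_
  rw [Set.ncard_coe_finset]
  refine card_biUnion_le.trans (sum_le_sum fun σ hσ => ?_)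
  obtain ⟨hσΔ, hσd⟩ := (mem_filter_univ σ).mp hσ
  exact hσd ▸ card_filter_Icc_le_choose (h.subset_facet σ hσΔ hσd) (k + 1)

open Classical in
lemma card_facet_gt_le_choose (h : IsCollapse Δ d τ key) (j : ℕ) :
    #{σ | (σ ∈ Δ ∧ #σ = d) ∧ j < #(τ σ)} ≤ (Fintype.card ι - j + d - 1).choose d := by
  set S : Finset (Finset ι) := {σ | (σ ∈ Δ ∧ #σ = d) ∧ j < #(τ σ)}
  rcases S.eq_empty_or_nonempty with hempty | ⟨σ₀, hσ₀⟩
  · simp [hempty]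
  have hmem : ∀ σ : S, (σ.1 ∈ Δ ∧ #σ.1 = d) ∧ j < #(τ σ) := fun σ =>
    (mem_filter_univ σ.1).mp σ.2
  have hj : j < Fintype.card ι := (hmem ⟨σ₀, hσ₀⟩).2.trans_le (card_le_univ _)
  have hbound := card_le_choose_of_skew (I := S) (A := (↑)) (B := fun σ => (τ σ)ᶜ) (a := d)
    (b := Fintype.card ι - j - 1) (fun σ => key σ) (fun σ => (hmem σ).1.2)
    (fun σ => by have := (hmem σ).2; rw [card_compl]; omega)
    (fun σ => disjoint_compl_right_iff.mpr (h.subset_facet σ (hmem σ).1.1 (hmem σ).1.2))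
    (fun σ σ' hne hdisj => h.key_lt σ (hmem σ).1.1 σ' (hmem σ').1.1 (hmem σ).1.2 (hmem σ').1.2
      (Subtype.coe_injective.ne hne) (disjoint_compl_right_iff.mp hdisj))
  rwa [Fintype.card_coe, show d + (Fintype.card ι - j - 1) = Fintype.card ι - j + d - 1 by omega]
    at hbound

theorem ncard_faces_le (h : IsCollapse Δ d τ key) {c k : ℕ} (hdim : ∀ ρ ∈ Δ, #ρ ≤ c)
    (hk : d ≤ k) :
    {ρ | #ρ = k + 1 ∧ ρ ∈ Δ}.ncard ≤
      ∑ j ∈ Finset.Ico k c,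
        (j - d).choose (k - d) * (Fintype.card ι - j + d - 1).choose d := by
  classical
  calc {ρ | #ρ = k + 1 ∧ ρ ∈ Δ}.ncard
      ≤ ∑ σ with σ ∈ Δ ∧ #σ = d, (#(τ σ) - d).choose (k + 1 - d) := h.ncard_faces_le_sum hk
    _ = ∑ σ with σ ∈ Δ ∧ #σ = d, ∑ j ∈ Finset.Ico k c with j < #(τ σ),
          (j - d).choose (k - d) := by
        refine sum_congr rfl fun σ hσ => ?_
        obtain ⟨hσ, hσd⟩ := (mem_filter_univ σ).mp hσ
        have hτ := hdim _ (h.facet_mem σ hσ hσd)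
        rw [choose_sub_eq_sum_Ico hk]
        congr 1
        ext j
        simp only [Finset.mem_Ico, mem_filter]
        omega
    _ = ∑ j ∈ Finset.Ico k c,
          (j - d).choose (k - d) * #{σ | (σ ∈ Δ ∧ #σ = d) ∧ j < #(τ σ)} := by
        simp_rw [sum_filter (fun j => j < #(τ _))]
        rw [sum_comm]
        refine sum_congr rfl fun j _ => ?_
        rw [← sum_filter, filter_filter, sum_const, smul_eq_mul, mul_comm]
    _ ≤ _ := sum_le_sum fun j _ => Nat.mul_le_mul_left _ (h.card_facet_gt_le_choose j)

end IsCollapse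

end Collapse

section LPType

variable {ι R : Type*}

lemma exists_isLeast_of_infClosed {α : Type*} [SemilatticeInf α] {s : Set α} (hfin : s.Finite)
    (hne : s.Nonempty) (hs : InfClosed s) : ∃ a, IsLeast s a := by
  obtain ⟨a, ha⟩ := hfin.exists_minimal hne
  exact ⟨a, ha.1, fun b hb => (ha.le_of_le (hs ha.1 hb) inf_le_left).trans inf_le_right⟩

lemma exists_isGreatest_of_supClosed {α : Type*} [SemilatticeSup α] {s : Set α} (hfin : s.Finite)
    (hne : s.Nonempty) (hs : SupClosed s) : ∃ a, IsGreatest s a :=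
  exists_isLeast_of_infClosed (α := αᵒᵈ) hfin hne hs

lemma exists_initial_subset_card_eq [LinearOrder ι] {s : Finset ι} {c : ℕ} (hc : c ≤ #s) :
    ∃ t ⊆ s, #t = c ∧ ∀ x ∈ s \ t, ∀ y ∈ t, y < x := by
  induction c with
  | zero => exact ⟨∅, empty_subset s, rfl, by simp⟩
  | succ c ih =>
    obtain ⟨t, hts, rfl, hlt⟩ := ih (by omega)
    have hne : (s \ t).Nonempty := by
      rw [← card_pos, card_sdiff_of_subset hts]
      omega
    have hmin := min'_mem _ hne
    refine ⟨insert ((s \ t).min' hne) t,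
      insert_subset (mem_sdiff.mp hmin).1 hts, card_insert_of_notMem (mem_sdiff.mp hmin).2, ?_⟩
    intro x hx y hy
    rw [mem_sdiff, mem_insert, not_or] at hx
    have hxst := mem_sdiff.mpr ⟨hx.1, hx.2.2⟩
    rcases mem_insert.mp hy with rfl | hy
    · exact lt_of_le_of_ne (min'_le _ x hxst) (Ne.symm hx.2.1)
    · exact hlt x hxst y hy

section UpperExtension

variable [LinearOrder ι] {m M σ σ' ρ : Finset ι}

/-- The largest `ρ ⊆ M` that arises from `σ` by adding elements larger than all those of `σ \ m`.
Within the interval `[m, M]` of faces these are the facets `τ σ` of a collapse. -/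
def upperExtension (m M σ : Finset ι) : Finset ι :=
  {x ∈ M | x ∈ σ ∨ ∀ y ∈ σ \ m, y < x}

lemma subset_upperExtension (hσ : σ ⊆ M) : σ ⊆ upperExtension m M σ :=
  fun _ hx => mem_filter.mpr ⟨hσ hx, Or.inl hx⟩

lemma upperExtension_subset : upperExtension m M σ ⊆ M :=
  filter_subset _ M

lemma exists_subset_upperExtension {d : ℕ} (hm : #m ≤ d) (hd : d ≤ #ρ) (hmρ : m ⊆ ρ)
    (hρM : ρ ⊆ M) : ∃ σ, m ⊆ σ ∧ σ ⊆ ρ ∧ #σ = d ∧ ρ ⊆ upperExtension m M σ := by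
  obtain ⟨t, htρ, htcard, hlt⟩ := exists_initial_subset_card_eq (s := ρ \ m) (c := d - #m)
    (by rw [card_sdiff_of_subset hmρ]; omega)
  have hdisj : Disjoint m t := disjoint_sdiff.mono_right htρ
  refine ⟨m ∪ t, subset_union_left, union_subset hmρ (htρ.trans sdiff_subset),
    by rw [card_union_of_disjoint hdisj]; omega, fun x hx => mem_filter.mpr ⟨hρM hx, ?_⟩⟩
  rw [union_sdiff_cancel_left hdisj, or_iff_not_imp_left, notMem_union]
  exact fun hxmt => hlt x (mem_sdiff.mpr ⟨mem_sdiff.mpr ⟨hx, hxmt.1⟩, hxmt.2⟩)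

lemma toColex_lt_of_subset_upperExtension (hmσ : m ⊆ σ) (hcard : #σ = #σ') (hne : σ ≠ σ')
    (hσ : σ ⊆ upperExtension m M σ') : toColex σ' < toColex σ := by
  refine Colex.toColex_lt_toColex.mpr ⟨hne.symm, fun y hyσ' hyσ => ?_⟩
  obtain ⟨x, hxσ, hxσ'⟩ : ∃ x ∈ σ, x ∉ σ' :=
    not_subset.mp fun hsub => hne (eq_of_subset_of_card_le hsub hcard.ge)
  have hlt := (mem_filter.mp (hσ hxσ)).2.resolve_left hxσ'
  exact ⟨x, hxσ, hxσ', (hlt y (mem_sdiff.mpr ⟨hyσ', fun hym => hyσ (hmσ hym)⟩)).le⟩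

end UpperExtension

/-- A nondegenerate LP-type problem of combinatorial dimension at most `d`: `Δ` consists of the
feasible sets of constraints and `v` is the optimal value of the objective. Nondegeneracy is
expressed by the closure properties of the feasible sets with a common value. -/
structure IsLPType [DecidableEq ι] [Preorder R] (Δ : Set (Finset ι)) (v : Finset ι → R)
    (d : ℕ) : Prop where
  monotoneOn : MonotoneOn v Δ
  isLowerSet : IsLowerSet Δ
  exists_basis : ∀ ρ ∈ Δ, ∃ σ ⊆ ρ, #σ ≤ d ∧ v σ = v ρ
  supClosed_fiber : ∀ p, SupClosed {ρ | ρ ∈ Δ ∧ v ρ = p}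
  infClosed_fiber : ∀ p, InfClosed {ρ | ρ ∈ Δ ∧ v ρ = p}

namespace IsLPType

variable {Δ : Set (Finset ι)} {v : Finset ι → R} {d : ℕ}

lemma exists_fiber_eq_Icc [Finite ι] [DecidableEq ι] [PartialOrder R] (h : IsLPType Δ v d) (p : R)
    (hp : ∃ σ ∈ Δ, v σ = p) :
    ∃ m M : Finset ι, #m ≤ d ∧ {ρ | ρ ∈ Δ ∧ v ρ = p} = Set.Icc m M := by
  obtain ⟨m, ⟨hmΔ, hmp⟩, hm⟩ :=
    exists_isLeast_of_infClosed (Set.toFinite _) hp (h.infClosed_fiber p)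
  obtain ⟨M, ⟨hMΔ, hMp⟩, hM⟩ :=
    exists_isGreatest_of_supClosed (Set.toFinite _) hp (h.supClosed_fiber p)
  obtain ⟨σ, hσm, hσd, hσp⟩ := h.exists_basis m hmΔ
  refine ⟨m, M, (card_le_card (hm ⟨h.isLowerSet hσm hmΔ, hσp.trans hmp⟩)).trans hσd, ?_⟩
  refine Set.Subset.antisymm (fun ρ hρ => ⟨hm hρ, hM hρ⟩) fun ρ ⟨hmρ, hρM⟩ => ?_
  have hρΔ := h.isLowerSet hρM hMΔ
  exact ⟨hρΔ, le_antisymm (hMp ▸ h.monotoneOn hρΔ hMΔ hρM) (hmp ▸ h.monotoneOn hmΔ hρΔ hmρ)⟩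

theorem exists_isCollapse [Finite ι] [LinearOrder ι] [PartialOrder R] (h : IsLPType Δ v d) :
    ∃ (τ : Finset ι → Finset ι) (key : Finset ι → Rᵒᵈ ×ₗ Colex (Finset ι)),
      IsCollapse Δ d τ key := by
  choose! m M hmd hfiber using h.exists_fiber_eq_Icc
  have mem_Icc : ∀ σ ∈ Δ, σ ∈ Set.Icc (m (v σ)) (M (v σ)) := fun σ hσ =>
    hfiber (v σ) ⟨σ, hσ, rfl⟩ ▸ ⟨hσ, rfl⟩
  have of_mem_Icc : ∀ σ ∈ Δ, ∀ ρ, m (v σ) ⊆ ρ → ρ ⊆ M (v σ) → ρ ∈ Δ ∧ v ρ = v σ :=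
    fun σ hσ ρ hmρ hρM => (hfiber (v σ) ⟨σ, hσ, rfl⟩).ge ⟨hmρ, hρM⟩
  have facet_mem : ∀ σ ∈ Δ, upperExtension (m (v σ)) (M (v σ)) σ ∈ Δ ∧
      v (upperExtension (m (v σ)) (M (v σ)) σ) = v σ := fun σ hσ =>
    of_mem_Icc σ hσ _ ((mem_Icc σ hσ).1.trans (subset_upperExtension (mem_Icc σ hσ).2))
      upperExtension_subset
  refine ⟨fun σ => upperExtension (m (v σ)) (M (v σ)) σ,
    fun σ => toLex (OrderDual.toDual (v σ), toColex σ),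
    fun σ hσ _ => subset_upperExtension (mem_Icc σ hσ).2, fun σ hσ _ => (facet_mem σ hσ).1, ?_, ?_⟩
  · intro ρ hρ hd
    obtain ⟨σ, hmσ, hσρ, hσd, hρσ⟩ := exists_subset_upperExtension (hmd (v ρ) ⟨ρ, hρ, rfl⟩) hd
      (mem_Icc ρ hρ).1 (mem_Icc ρ hρ).2
    obtain ⟨hσ, hv⟩ := of_mem_Icc ρ hρ σ hmσ (hσρ.trans (mem_Icc ρ hρ).2)
    exact ⟨σ, hσ, hσd, hσρ, by rwa [hv]⟩
  · intro σ hσ σ' hσ' hσd hσ'd hne hsub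
    have hle : v σ ≤ v σ' := (facet_mem σ' hσ').2 ▸ h.monotoneOn hσ (facet_mem σ' hσ').1 hsub
    rw [Prod.Lex.toLex_lt_toLex]
    rcases hle.lt_or_eq with hlt | heq
    · exact Or.inl (OrderDual.toDual_lt_toDual.mpr hlt)
    · exact Or.inr ⟨congrArg OrderDual.toDual heq.symm, toColex_lt_of_subset_upperExtension
        (heq ▸ (mem_Icc σ hσ).1) (hσd.trans hσ'd.symm) hne hsub⟩

end IsLPType

end LPType

section Generic

lemma card_mul_card_le_of_subsingleton_on_lines {ι β : Type*} [Fintype ι] [DecidableEq ι]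
    [Fintype β] (i : ι) (S : Finset (ι → β))
    (hS : ∀ x ∈ S, ∀ y ∈ S, (∀ j ≠ i, x j = y j) → x = y) :
    Fintype.card β * #S ≤ Fintype.card (ι → β) := by
  have hle : #S ≤ Fintype.card ({j // j ≠ i} → β) :=
    card_le_card_of_injOn (fun x j => x j) (fun x _ => mem_univ _) fun x hx y hy hxy =>
      hS x hx y hy fun j hj => congrFun hxy ⟨j, hj⟩
  rw [Fintype.card_congr (Equiv.funSplitAt i β), Fintype.card_prod]
  exact Nat.mul_le_mul_left _ hle

-- Count points of a grid with more than `|T|` values in each coordinate.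
lemma exists_forall_notMem_of_subsingleton_on_lines {ι T α : Type*} [Finite ι] [Finite T]
    [Infinite α] (c : T → ι) (B : T → Set (ι → α))
    (hB : ∀ t, ∀ x ∈ B t, ∀ y ∈ B t, (∀ j ≠ c t, x j = y j) → x = y) :
    ∃ x, ∀ t, x ∉ B t := by
  classical
  have := Fintype.ofFinite ι
  have := Fintype.ofFinite T
  by_contra! hcover
  set β := Fin (Fintype.card T + 1)
  obtain ⟨e⟩ : Nonempty (β ↪ α) := ⟨Fin.valEmbedding.trans (Infinite.natEmbedding α)⟩
  let S : T → Finset (ι → β) := fun t => {g | e ∘ g ∈ B t}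
  have hunion : (univ : Finset (ι → β)) ⊆ univ.biUnion S := fun g _ => by
    obtain ⟨t, ht⟩ := hcover (e ∘ g)
    exact mem_biUnion.mpr ⟨t, mem_univ t, (mem_filter_univ g).mpr ht⟩
  have hline : ∀ t, Fintype.card β * #(S t) ≤ Fintype.card (ι → β) := fun t =>
    card_mul_card_le_of_subsingleton_on_lines (c t) (S t) fun x hx y hy hxy =>
      e.injective.comp_left <| hB t _ ((mem_filter_univ x).mp hx) _ ((mem_filter_univ y).mp hy)
        fun j hj => congrArg e (hxy j hj)
  have hcount : Fintype.card β * Fintype.card (ι → β) ≤ Fintype.card T * Fintype.card (ι → β) :=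
    calc Fintype.card β * Fintype.card (ι → β)
        ≤ Fintype.card β * ∑ t, #(S t) :=
          Nat.mul_le_mul_left _ ((card_le_card hunion).trans card_biUnion_le)
      _ = ∑ t, Fintype.card β * #(S t) := mul_sum _ _ _
      _ ≤ ∑ _t : T, Fintype.card (ι → β) := sum_le_sum fun t _ => hline t
      _ = Fintype.card T * Fintype.card (ι → β) := by rw [sum_const, card_univ, smul_eq_mul]
  have hle := Nat.le_of_mul_le_mul_right hcount Fintype.card_pos
  rw [Fintype.card_fin] at hle
  omega

end Generic

section Nerve

variable {ι α : Type*}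

lemma isLowerSet_nerve (A : ι → Set α) : IsLowerSet (nerve A) := fun _ _ h hρ =>
  Set.Nonempty.mono (Set.biInter_subset_biInter_left h) hρ

lemma nerve_subset_nerve {A B : ι → Set α} (h : ∀ i, A i ⊆ B i) : nerve A ⊆ nerve B :=
  fun _ hσ => Set.Nonempty.mono (Set.iInter₂_mono fun i _ => h i) hσ

lemma nerve_image_equiv {β : Type*} (e : α ≃ β) (A : ι → Set α) :
    nerve (fun i => e '' A i) = nerve A := by
  ext σ
  simp only [nerve, Set.mem_ofPred_eq, ← Set.image_iInter₂ e.bijective, Set.image_nonempty]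

lemma exists_isCompact_convex_nerve_eq {E : Type*} [AddCommGroup E] [Module ℝ E]
    [TopologicalSpace E] [IsTopologicalAddGroup E] [ContinuousSMul ℝ E] [Finite ι] {A : ι → Set E}
    (hA : ∀ i, Convex ℝ (A i)) :
    ∃ K : ι → Set E, (∀ i, IsCompact (K i)) ∧ (∀ i, Convex ℝ (K i)) ∧ nerve K = nerve A := by
  have hpoint : ∀ σ ∈ nerve A, ∃ x, ∀ i ∈ σ, x ∈ A i := fun σ ⟨x, hx⟩ =>
    ⟨x, Set.mem_iInter₂.mp hx⟩
  choose! p hp using hpoint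
  refine ⟨fun i => convexHull ℝ (p '' {σ | σ ∈ nerve A ∧ i ∈ σ}),
    fun i => (Set.toFinite _).isCompact_convexHull ℝ, fun i => convex_convexHull ℝ _,
    Set.Subset.antisymm (nerve_subset_nerve fun i => convexHull_min ?_ (hA i)) fun σ hσ => ?_⟩
  · rintro _ ⟨σ, ⟨hσ, hi⟩, rfl⟩
    exact hp σ hσ i hi
  · exact ⟨p σ, Set.mem_iInter₂.mpr fun i hi =>
      subset_convexHull ℝ _ (Set.mem_image_of_mem p ⟨hσ, hi⟩)⟩

section Thickening

open Filter Metric Topology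

/-- The closed thickenings of the members of a family, with an individual radius for each. -/
abbrev cthickeningFamily [PseudoMetricSpace α] (K : ι → Set α) (s : ι → ℝ) : ι → Set α :=
  fun i => cthickening (s i) (K i)

variable [PseudoMetricSpace α] [ProperSpace α] {K : ι → Set α}

lemma mem_nerve_of_forall_mem_nerve_cthickening (hK : ∀ i, IsCompact (K i))
    (hclosed : ∀ i, IsClosed (K i)) {σ : Finset ι}
    (hσ : ∀ δ > 0, σ ∈ nerve (cthickeningFamily K fun _ => δ)) : σ ∈ nerve K := by
  obtain rfl | ⟨i₀, hi₀⟩ := σ.eq_empty_or_nonempty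
  · simpa [nerve] using hσ 1 one_pos
  have hinter_closed : ∀ δ, IsClosed (⋂ i ∈ σ, cthickening δ (K i)) := fun δ =>
    isClosed_biInter fun i _ => isClosed_cthickening
  obtain ⟨x, hx⟩ := IsCompact.nonempty_iInter_of_directed_nonempty_isCompact_isClosed
    (fun δ : Set.Ioi (0 : ℝ) => ⋂ i ∈ σ, cthickening δ (K i))
    (Monotone.directed_ge fun δ δ' h => Set.iInter₂_mono fun i _ => cthickening_mono h (K i))
    (fun δ => hσ δ δ.2)
    (fun δ => (hK i₀).cthickening.of_isClosed_subset (hinter_closed δ)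
      (Set.biInter_subset_of_mem hi₀))
    (fun δ => hinter_closed δ)
  refine ⟨x, Set.mem_iInter₂.mpr fun i hi => ?_⟩
  rw [← (hclosed i).closure_eq, closure_eq_iInter_cthickening]
  exact Set.mem_iInter₂.mpr fun δ hδ => Set.mem_iInter₂.mp (Set.mem_iInter.mp hx ⟨δ, hδ⟩) i hi

lemma exists_pos_nerve_cthickening_eq [Finite ι] (hK : ∀ i, IsCompact (K i))
    (hclosed : ∀ i, IsClosed (K i)) :
    ∃ δ > (0 : ℝ), ∀ s : ι → Set.Icc 0 δ, nerve (cthickeningFamily K fun i => s i) = nerve K := by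
  have hsmall : ∀ σ, ∀ᶠ δ in 𝓝[>] 0,
      σ ∈ nerve (cthickeningFamily K fun _ => δ) → σ ∈ nerve K := by
    intro σ
    by_cases hσ : σ ∈ nerve K
    · exact .of_forall fun _ _ => hσ
    obtain ⟨δ, hδ, hσδ⟩ : ∃ δ > 0, σ ∉ nerve (cthickeningFamily K fun _ => δ) := by
      by_contra! hall
      exact hσ (mem_nerve_of_forall_mem_nerve_cthickening hK hclosed hall)
    filter_upwards [Ioc_mem_nhdsGT hδ] with ε hε hσε
    exact absurd (nerve_subset_nerve (fun i => cthickening_mono hε.2 (K i)) hσε) hσδ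
  obtain ⟨δ, hδ, hpos⟩ := ((eventually_all.mpr hsmall).and self_mem_nhdsWithin).exists
  refine ⟨δ, hpos, fun s => Set.Subset.antisymm (fun σ hσ => hδ σ ?_)
    (nerve_subset_nerve fun i => self_subset_cthickening _)⟩
  exact nerve_subset_nerve (fun i => cthickening_mono (s i).2.2 (K i)) hσ

end Thickening

end Nerve

section InterDist

open Metric

variable {ι E : Type*} [NormedAddCommGroup E]

/-- The distance from the origin to the set of common points of the `C i` with `i ∈ σ`. This is the
optimal value of the LP-type problem attached to the family `C`; it is meaningful only for
`σ ∈ nerve C`. -/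
noncomputable def interDist (C : ι → Set E) (σ : Finset ι) : ℝ :=
  infDist 0 (⋂ i ∈ σ, C i)

lemma interDist_le_norm {C : ι → Set E} {σ : Finset ι} {x : E} (hx : x ∈ ⋂ i ∈ σ, C i) :
    interDist C σ ≤ ‖x‖ :=
  (infDist_le_dist_of_mem hx).trans_eq (dist_zero_left x)

lemma monotoneOn_interDist (C : ι → Set E) : MonotoneOn (interDist C) (nerve C) :=
  fun _ _ _ hρ h => infDist_le_infDist_of_subset (Set.biInter_subset_biInter_left h) hρ

lemma exists_norm_eq_interDist [ProperSpace E] {C : ι → Set E} (hC : ∀ i, IsClosed (C i))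
    {σ : Finset ι} (hσ : σ ∈ nerve C) : ∃ x ∈ ⋂ i ∈ σ, C i, ‖x‖ = interDist C σ := by
  have hclosed : IsClosed (⋂ i ∈ σ, C i) := isClosed_biInter fun i _ => hC i
  obtain ⟨x, hx, hdist⟩ := hclosed.exists_infDist_eq_dist hσ 0
  exact ⟨x, hx, by rw [interDist, hdist, dist_zero_left]⟩

/-- General position of the family `C` with respect to `interDist`: if the distances for `σ` and
`σ'` agree, then no constraint of `σ` outside `σ'` is active. -/
def IsGenericForDist [DecidableEq ι] (C : ι → Set E) : Prop :=
  ∀ σ ∈ nerve C, ∀ σ' : Finset ι, ∀ i ∈ σ, i ∉ σ' →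
    interDist C σ = interDist C σ' → interDist C (σ.erase i) = interDist C σ

lemma IsGenericForDist.interDist_inter_eq [DecidableEq ι] {C : ι → Set E} (hC : IsGenericForDist C)
    {σ σ' : Finset ι} (hσ : σ ∈ nerve C) (hdist : interDist C σ = interDist C σ') :
    interDist C (σ ∩ σ') = interDist C σ := by
  suffices h : ∀ t ⊆ σ \ σ', interDist C (σ \ t) = interDist C σ by
    simpa using h (σ \ σ') subset_rfl
  intro t ht
  induction t using Finset.induction_on with
  | empty => rw [sdiff_empty]
  | insert i t hit ih =>
    have hi := mem_sdiff.mp (ht (mem_insert_self i t))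
    have ih := ih ((subset_insert i t).trans ht)
    rw [sdiff_insert, hC (σ \ t) (isLowerSet_nerve C sdiff_subset hσ) σ' i
      (mem_sdiff.mpr ⟨hi.1, hit⟩) hi.2 (ih.trans hdist), ih]

variable [NormedSpace ℝ E]

lemma infDist_zero_eq_of_mem_interior {D U : Set E} {x : E} (hD : Convex ℝ D) (hxD : x ∈ D)
    (hxU : x ∈ interior U) (hx : ‖x‖ = infDist 0 (D ∩ U)) : infDist 0 D = ‖x‖ := by
  have hlocal : IsLocalMinOn norm D x := by
    filter_upwards [self_mem_nhdsWithin,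
      mem_nhdsWithin_of_mem_nhds (mem_interior_iff_mem_nhds.mp hxU)] with y hyD hyU
    have hyDU : y ∈ D ∩ U := ⟨hyD, hyU⟩
    exact hx.trans_le ((infDist_le_dist_of_mem hyDU).trans_eq (dist_zero_left y))
  have hmin : IsMinOn norm D x := .of_isLocalMinOn_of_convexOn hxD hlocal (convexOn_norm hD)
  refine le_antisymm ((infDist_le_dist_of_mem hxD).trans_eq (dist_zero_left x)) ?_
  exact (le_infDist ⟨x, hxD⟩).mpr fun y hy => (hmin hy).trans_eq (dist_zero_left y).symm

lemma eq_of_norm_eq_infDist_zero [StrictConvexSpace ℝ E] {D : Set E} {x y : E} (hD : Convex ℝ D)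
    (hxD : x ∈ D) (hyD : y ∈ D) (hx : ‖x‖ = infDist 0 D) (hy : ‖y‖ = infDist 0 D) : x = y := by
  by_contra hne
  have hlt := (norm_midpoint_lt_iff (hx.trans hy.symm)).mpr hne
  have hmem : (1 / 2 : ℝ) • (x + y) ∈ D := by
    rw [smul_add]
    exact hD hxD hyD (by norm_num) (by norm_num) (by norm_num)
  exact hlt.not_ge (hx.trans_le ((infDist_le_dist_of_mem hmem).trans_eq (dist_zero_left _)))

-- If every small `σ ⊆ ρ` had a smaller distance, Helly's theorem would give the sets `C i` with
-- `i ∈ ρ` a common point in the open ball of radius `interDist C ρ`.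
lemma exists_card_le_finrank_interDist_eq [FiniteDimensional ℝ E] {C : ι → Set E}
    (hC : ∀ i, Convex ℝ (C i)) {ρ : Finset ι} (hρ : ρ ∈ nerve C) :
    ∃ σ ⊆ ρ, #σ ≤ finrank ℝ E ∧ interDist C σ = interDist C ρ := by
  by_contra! hne
  let F : Option ι → Set E := fun o => o.elim (ball 0 (interDist C ρ)) C
  have hF : (⋂ o ∈ insertNone ρ, F o).Nonempty := by
    refine Convex.helly_theorem' (𝕜 := ℝ) (F := F) (s := insertNone ρ)
      (fun o _ => o.casesOn (convex_ball _ _) hC) fun I hI hcard => ?_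
    have hsub : eraseNone I ⊆ ρ := fun i hi => some_mem_insertNone.mp (hI (mem_eraseNone.mp hi))
    have hmem := isLowerSet_nerve C hsub hρ
    obtain ⟨x, hxC, hxball⟩ : ∃ x ∈ ⋂ i ∈ eraseNone I, C i, none ∈ I → ‖x‖ < interDist C ρ := by
      by_cases hnone : none ∈ I
      · have hlt := (monotoneOn_interDist C hmem hρ hsub).lt_of_ne
          (hne _ hsub (by rw [card_eraseNone_of_mem hnone]; omega))
        obtain ⟨x, hx, hdist⟩ := (infDist_lt_iff hmem).mp hlt
        exact ⟨x, hx, fun _ => by rwa [dist_zero_left] at hdist⟩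
      · exact hmem.imp fun x hx => ⟨hx, fun h => absurd h hnone⟩
    refine ⟨x, Set.mem_iInter₂.mpr ?_⟩
    rintro (_ | i) ho
    exacts [mem_ball_zero_iff.mpr (hxball ho), Set.mem_iInter₂.mp hxC i (mem_eraseNone.mpr ho)]
  obtain ⟨x, hx⟩ := hF
  have hxF := Set.mem_iInter₂.mp hx
  have hxball : x ∈ ball 0 (interDist C ρ) := hxF none none_mem_insertNone
  have hxC : x ∈ ⋂ i ∈ ρ, C i :=
    Set.mem_iInter₂.mpr fun i hi => hxF (some i) (some_mem_insertNone.mpr hi)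
  exact (interDist_le_norm hxC).not_gt (mem_ball_zero_iff.mp hxball)

variable [DecidableEq ι]

lemma interDist_erase_eq_of_subset_interior [ProperSpace E] {C C' : ι → Set E} {i : ι}
    (hclosed : ∀ i, IsClosed (C i)) (hconvex : ∀ i, Convex ℝ (C i)) (heq : ∀ j ≠ i, C j = C' j)
    (hint : C i ⊆ interior (C' i)) {σ : Finset ι} (hσ : σ ∈ nerve C) (hi : i ∈ σ)
    (hdist : interDist C σ = interDist C' σ) :
    interDist C (σ.erase i) = interDist C σ := by
  obtain ⟨x, hx, hnorm⟩ := exists_norm_eq_interDist hclosed hσ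
  have hC' : ⋂ j ∈ σ, C' j = (⋂ j ∈ σ.erase i, C j) ∩ C' i := by
    rw [← insert_erase hi, set_biInter_insert, erase_insert_eq_erase, erase_idem, Set.inter_comm,
      Set.iInter₂_congr fun j hj => heq j (ne_of_mem_erase hj)]
  have hxi := Set.mem_iInter₂.mp hx
  rw [← hnorm]
  refine infDist_zero_eq_of_mem_interior (convex_iInter₂ fun j _ => hconvex j)
    (Set.mem_iInter₂.mpr fun j hj => hxi j (mem_of_mem_erase hj)) (hint (hxi i hi)) ?_
  rw [hnorm, hdist, interDist, hC']

lemma not_lt_of_interDist_erase_ne [ProperSpace E] {K : ι → Set E} (hK : ∀ i, Convex ℝ (K i))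
    {s s' : ι → ℝ} {i : ι} (hs : 0 ≤ s i) (hagree : ∀ j ≠ i, s j = s' j) {σ : Finset ι}
    (hσ : σ ∈ nerve K) (hi : i ∈ σ)
    (hdist : interDist (cthickeningFamily K s) σ = interDist (cthickeningFamily K s') σ)
    (hne : interDist (cthickeningFamily K s) (σ.erase i) ≠
      interDist (cthickeningFamily K s) σ) : ¬ s i < s' i := fun hlt =>
  hne <| interDist_erase_eq_of_subset_interior (C' := cthickeningFamily K s')
    (fun _ => isClosed_cthickening) (fun j => (hK j).cthickening _)
    (fun j hj => by simp only [cthickeningFamily, hagree j hj])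
    ((cthickening_subset_thickening' (hs.trans_lt hlt) hlt _).trans
      (thickening_subset_interior_cthickening _ _))
    (nerve_subset_nerve (fun _ => self_subset_cthickening _) hσ) hi hdist

-- With all radii but the `i`-th fixed, each violation of genericity involving `i` happens for at
-- most one value of the `i`-th radius.
lemma exists_isGenericForDist_cthickeningFamily [Finite ι] [ProperSpace E] {K : ι → Set E}
    (hK : ∀ i, Convex ℝ (K i)) {δ : ℝ} (hδ : 0 < δ)
    (hnerve : ∀ s : ι → Set.Icc 0 δ, nerve (cthickeningFamily K fun i => s i) = nerve K) :
    ∃ s : ι → Set.Icc 0 δ, IsGenericForDist (cthickeningFamily K fun i => s i) := by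
  let dist (s : ι → Set.Icc 0 δ) : Finset ι → ℝ := interDist (cthickeningFamily K fun i => s i)
  let bad (t : Finset ι × Finset ι × ι) : Set (ι → Set.Icc 0 δ) :=
    {s | t.1 ∈ nerve K ∧ t.2.2 ∈ t.1 ∧ t.2.2 ∉ t.2.1 ∧ dist s t.1 = dist s t.2.1 ∧
      dist s (t.1.erase t.2.2) ≠ dist s t.1}
  have : Infinite (Set.Icc 0 δ) := (Set.Icc_infinite hδ).to_subtype
  have hbad : ∀ t, ∀ s ∈ bad t, ∀ s' ∈ bad t, (∀ j ≠ t.2.2, s j = s' j) → s = s' := by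
    rintro ⟨σ, σ', i⟩ s ⟨hσ, hi, hi', hdist, hne⟩ s' ⟨-, -, -, hdist', hne'⟩ hagree
    have hagree_val : ∀ j ≠ i, (s j : ℝ) = s' j := fun j hj => congrArg _ (hagree j hj)
    have hσ' : dist s σ' = dist s' σ' := congrArg (infDist 0) <| Set.iInter₂_congr fun j hj => by
      simp only [cthickeningFamily, hagree_val j (ne_of_mem_of_not_mem hj hi')]
    have hσdist : dist s σ = dist s' σ := hdist.trans (hσ'.trans hdist'.symm)
    have hle := not_lt.mp (not_lt_of_interDist_erase_ne hK (s i).2.1 hagree_val hσ hi hσdist hne)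
    have hge := not_lt.mp (not_lt_of_interDist_erase_ne hK (s' i).2.1
      (fun j hj => (hagree_val j hj).symm) hσ hi hσdist.symm hne')
    funext j
    rcases eq_or_ne j i with rfl | hj
    exacts [Subtype.ext (le_antisymm hge hle), hagree j hj]
  obtain ⟨s, hs⟩ := exists_forall_notMem_of_subsingleton_on_lines (fun t => t.2.2) bad hbad
  refine ⟨s, fun σ hσ σ' i hi hi' hdist => ?_⟩
  by_contra hne
  exact hs (σ, σ', i) ⟨hnerve s ▸ hσ, hi, hi', hdist, hne⟩

theorem IsGenericForDist.isLPType [FiniteDimensional ℝ E] [StrictConvexSpace ℝ E]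
    {C : ι → Set E} (hC : IsGenericForDist C) (hclosed : ∀ i, IsClosed (C i))
    (hconvex : ∀ i, Convex ℝ (C i)) : IsLPType (nerve C) (interDist C) (finrank ℝ E) where
  monotoneOn := monotoneOn_interDist C
  isLowerSet := isLowerSet_nerve C
  exists_basis _ hρ := exists_card_le_finrank_interDist_eq hconvex hρ
  infClosed_fiber := by
    rintro p σ ⟨hσ, rfl⟩ σ' ⟨-, hp⟩
    exact ⟨isLowerSet_nerve C inter_subset_left hσ, hC.interDist_inter_eq hσ hp.symm⟩
  supClosed_fiber := by
    rintro p σ ⟨hσ, rfl⟩ σ' ⟨hσ', hp⟩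
    have := FiniteDimensional.proper ℝ E
    obtain ⟨x, hx, hxnorm⟩ := exists_norm_eq_interDist hclosed hσ
    obtain ⟨y, hy, hynorm⟩ := exists_norm_eq_interDist hclosed hσ'
    have hinter := hC.interDist_inter_eq hσ hp.symm
    obtain rfl : x = y := eq_of_norm_eq_infDist_zero
      (convex_iInter₂ fun i (_ : i ∈ σ ∩ σ') => hconvex i)
      (Set.biInter_subset_biInter_left inter_subset_left hx)
      (Set.biInter_subset_biInter_left inter_subset_right hy)
      (hxnorm.trans hinter.symm) ((hynorm.trans hp).trans hinter.symm)
    have hunion : x ∈ ⋂ i ∈ σ ∪ σ', C i := by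
      rw [set_biInter_inter]
      exact ⟨hx, hy⟩
    refine ⟨⟨x, hunion⟩, le_antisymm ((interDist_le_norm hunion).trans_eq hxnorm) ?_⟩
    exact monotoneOn_interDist C hσ ⟨x, hunion⟩ subset_union_left

end InterDist

theorem exists_isLPType_nerve {ι E : Type*} [Finite ι] [DecidableEq ι] [AddCommGroup E]
    [Module ℝ E] [FiniteDimensional ℝ E] {A : ι → Set E} (hA : ∀ i, Convex ℝ (A i)) :
    ∃ v : Finset ι → ℝ, IsLPType (nerve A) v (finrank ℝ E) := by
  let e : E ≃ₗ[ℝ] EuclideanSpace ℝ (Fin (finrank ℝ E)) :=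
    LinearEquiv.ofFinrankEq _ _ finrank_euclideanSpace_fin.symm
  obtain ⟨K, hcompact, hconvex, hK⟩ :=
    exists_isCompact_convex_nerve_eq fun i => (hA i).linear_image e.toLinearMap
  obtain ⟨δ, hδ, hnerve⟩ := exists_pos_nerve_cthickening_eq hcompact fun i => (hcompact i).isClosed
  obtain ⟨s, hs⟩ := exists_isGenericForDist_cthickeningFamily hconvex hδ hnerve
  have hLP := hs.isLPType (fun _ => Metric.isClosed_cthickening) fun i => (hconvex i).cthickening _
  rw [hnerve s, hK, finrank_euclideanSpace_fin] at hLP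
  exact ⟨_, nerve_image_equiv e.toEquiv A ▸ hLP⟩

theorem upper_bound_theorem_convex_general {ι E : Type*} [Fintype ι] [AddCommGroup E] [Module ℝ E]
    [FiniteDimensional ℝ E] {c k : ℕ} {A : ι → Set E} (hconv : ∀ i, Convex ℝ (A i))
    (hempty : ∀ σ : Finset ι, #σ = c + 1 → ⋂ i ∈ σ, A i = ∅) (hk : finrank ℝ E ≤ k) :
    {σ : Finset ι | #σ = k + 1 ∧ (⋂ i ∈ σ, A i).Nonempty}.ncard ≤
      ∑ j ∈ Finset.Ico k c, (j - finrank ℝ E).choose (k - finrank ℝ E) *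
        (Fintype.card ι - j + finrank ℝ E - 1).choose (finrank ℝ E) := by
  let _ : LinearOrder ι := LinearOrder.lift' (Fintype.equivFin ι) (Fintype.equivFin ι).injective
  obtain ⟨v, hLP⟩ := exists_isLPType_nerve hconv
  obtain ⟨τ, key, hcollapse⟩ := hLP.exists_isCollapse
  have hdim : ∀ ρ ∈ nerve A, #ρ ≤ c := by
    intro ρ hρ
    by_contra! hlt
    obtain ⟨σ, hσρ, hσ⟩ := exists_subset_card_eq (Nat.succ_le_of_lt hlt)
    exact (isLowerSet_nerve A hσρ hρ).ne_empty (hempty σ hσ)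
  exact hcollapse.ncard_faces_le hdim hk

/-- **Kalai–Eckhoff upper bound theorem.** If `𝒜` is a family of `n` convex sets in `ℝ^d`
such that each `d+r+1` members of `𝒜` have empty intersection, then for
`k = d, …, d+r-1` one has `f_k(𝒜) ≤ ∑_{j=k}^{d+r-1} C(j-d, k-d)·C(n-j+d-1, d)`. -/
theorem upper_bound_theorem_convex (d r n : ℕ) (hd : 1 ≤ d)
    (A : Fin n → Set (EuclideanSpace ℝ (Fin d)))
    (hconv : ∀ i, Convex ℝ (A i))
    (hempty : ∀ σ : Finset (Fin n), σ.card = d + r + 1 → (⋂ i ∈ σ, A i) = ∅) :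
    ∀ k, d ≤ k → k ≤ d + r - 1 →
      fNum A k ≤ ∑ j ∈ Finset.Icc k (d + r - 1),
        Nat.choose (j - d) (k - d) * Nat.choose (n - j + d - 1) d := by
  intro k hk _
  have hbound :=
    upper_bound_theorem_convex_general hconv hempty (finrank_euclideanSpace_fin.trans_le hk)
  rwa [finrank_euclideanSpace_fin, Fintype.card_fin,
    ← Icc_sub_one_right_eq_Ico_of_not_isMin (by simpa using by omega)] at hbound
end

section
/- Let k ≥ 2 be an integer and let 𝒜 = {A_1, …, A_n} be a finite family of subsets of ℝ² satisfying: (i) f_{k+1}(𝒜) = 0, and (ii) for every σ ⊆ {1, …, n} with |σ| ∈ {k, k+1}, the set A_σ is empty, or a single point, or both open and path-connected. Then f_k(𝒜) ≤ ((4k+1)/(4k²−7k+1)) · f^{ind}_{k-1}(𝒜). -/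
/-- `fInd A k` is `f_k^{ind}(𝒜)`: the number of subsets `τ` with `|τ| = k+1` and
`⋂ i ∈ τ, A i ≠ ∅` for which there is `σ ⊃ τ` with `|σ| = k+2` and `⋂ i ∈ σ, A i ≠ ∅`. -/
noncomputable def fInd {α : Type*} {n : ℕ} (A : Fin n → Set α) (k : ℕ) : ℕ :=
  Nat.card {τ : Finset (Fin n) // τ.card = k + 1 ∧ (⋂ i ∈ τ, A i).Nonempty ∧
    ∃ σ : Finset (Fin n), τ ⊂ σ ∧ σ.card = k + 2 ∧ (⋂ i ∈ σ, A i).Nonempty}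

open Finset

section CycleSpace

variable {V : Type*}

theorem exists_trail_of_forall_exists_adj_ne [DecidableEq V] {H : SimpleGraph V} (hH : H ≠ ⊥)
    (hdeg : ∀ x y, H.Adj x y → ∃ w ≠ y, H.Adj x w) :
    ∃ w x y u, H.Adj w x ∧ H.Adj x y ∧ H.Adj y u ∧ #{s(w, x), s(x, y), s(y, u)} = 3 := by
  obtain ⟨x, y, hxy⟩ := SimpleGraph.ne_bot_iff_exists_adj.1 hH
  obtain ⟨w, hwy, hxw⟩ := hdeg x y hxy
  obtain ⟨u, hux, hyu⟩ := hdeg y x hxy.symm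
  refine ⟨w, x, y, u, hxw.symm, hxy, hyu, card_eq_three.2 ⟨_, _, _, ?_, ?_, ?_, rfl⟩⟩ <;>
    grind [hxw.ne, hxy.ne, hyu.ne, Sym2.eq_iff]

theorem three_le_card_edgeFinset {H : SimpleGraph V} [Fintype H.edgeSet] (hH : H ≠ ⊥)
    (hdeg : ∀ x y, H.Adj x y → ∃ w ≠ y, H.Adj x w) : 3 ≤ #H.edgeFinset := by
  classical
  obtain ⟨w, x, y, u, hwx, hxy, hyu, h3⟩ := exists_trail_of_forall_exists_adj_ne hH hdeg
  rw [← h3]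
  exact card_le_card (by simp [insert_subset_iff, hwx, hxy, hyu])

theorem exists_edgeFinset_eq_triangle [DecidableEq V] {H : SimpleGraph V} [Fintype H.edgeSet]
    (hcard : #H.edgeFinset = 3) (hdeg : ∀ x y, H.Adj x y → ∃ w ≠ y, H.Adj x w) :
    ∃ x y w, H.edgeFinset = {s(x, y), s(x, w), s(y, w)} := by
  have hH : H ≠ ⊥ := by
    rintro rfl
    simp [SimpleGraph.edgeFinset] at hcard
  obtain ⟨w, x, y, u, hwx, hxy, hyu, h3⟩ := exists_trail_of_forall_exists_adj_ne hH hdeg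
  have hedges : {s(w, x), s(x, y), s(y, u)} = H.edgeFinset :=
    eq_of_subset_of_card_le (by simp [insert_subset_iff, hwx, hxy, hyu]) (by omega)
  obtain ⟨v, hvx, hwv⟩ := hdeg w x hwx
  have hwv' : s(w, v) ∈ ({s(w, x), s(x, y), s(y, u)} : Finset _) := by simpa [hedges] using hwv
  have hwy : w ≠ y := by
    rintro rfl
    exact absurd (card_le_two (a := s(w, x)) (b := s(w, u))) (by grind [Sym2.eq_swap])
  have huw : u = w := by grind [hwx.ne, hwv.ne, Sym2.eq_iff]
  exact ⟨x, y, w, by rw [← hedges, huw]; grind [Sym2.eq_swap]⟩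

section Support

variable {G : SimpleGraph V}

/-- The subgraph of `G` formed by the edges in the support of the 1-chain `z`. -/
def supportGraph (z : G.edgeSet → ZMod 2) : SimpleGraph V :=
  SimpleGraph.fromEdgeSet {e | ∃ h : e ∈ G.edgeSet, z ⟨e, h⟩ ≠ 0}

theorem supportGraph_adj {z : G.edgeSet → ZMod 2} {x y : V} :
    (supportGraph z).Adj x y ↔ ∃ h : G.Adj x y, z ⟨s(x, y), h⟩ ≠ 0 := by
  rw [supportGraph, SimpleGraph.fromEdgeSet_adj]
  exact ⟨fun h => h.1, fun h => ⟨h, h.1.ne⟩⟩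

theorem mem_edgeSet_supportGraph {z : G.edgeSet → ZMod 2} (e : G.edgeSet) :
    e.1 ∈ (supportGraph z).edgeSet ↔ z e ≠ 0 := by
  obtain ⟨⟨x, y⟩, h⟩ := e
  exact supportGraph_adj.trans ⟨fun h' => h'.2, fun h' => ⟨h, h'⟩⟩

theorem supportGraph_ne_bot {z : G.edgeSet → ZMod 2} (hz : z ≠ 0) : supportGraph z ≠ ⊥ := by
  obtain ⟨e, he⟩ := Function.ne_iff.1 hz
  intro h
  simpa [h] using (mem_edgeSet_supportGraph e).2 he

theorem card_edgeFinset_supportGraph [Fintype G.edgeSet] (z : G.edgeSet → ZMod 2)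
    [Fintype (supportGraph z).edgeSet] :
    #(supportGraph z).edgeFinset = #{e | z e ≠ 0} := by
  refine (card_bij (fun e _ => e.1) ?_ (fun _ _ _ _ => Subtype.ext) ?_).symm
  · intro e he
    rw [SimpleGraph.mem_edgeFinset, mem_edgeSet_supportGraph]
    exact (mem_filter.1 he).2
  · rintro ⟨x, y⟩ he
    obtain ⟨h, hz⟩ := supportGraph_adj.1 (SimpleGraph.mem_edgeFinset.1 he)
    exact ⟨⟨s(x, y), h⟩, by simpa using hz, rfl⟩

end Support

variable [Fintype V] [DecidableEq V] {G : SimpleGraph V} [DecidableRel G.Adj]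

/-- The mod 2 boundary map of the graph `G`, from 1-chains to 0-chains. -/
noncomputable def chainBoundary (G : SimpleGraph V) [DecidableRel G.Adj] :
    (G.edgeSet → ZMod 2) →ₗ[ZMod 2] (V → ZMod 2) :=
  Fintype.linearCombination (ZMod 2) fun e v => if v ∈ e.1 then 1 else 0

theorem chainBoundary_apply (z : G.edgeSet → ZMod 2) (v : V) :
    chainBoundary G z v = ∑ e with v ∈ e.1, z e := by
  simp [chainBoundary, Fintype.linearCombination_apply, sum_filter]

theorem exists_supportGraph_adj_ne {z : G.edgeSet → ZMod 2} (hz : chainBoundary G z = 0)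
    (x y : V) (hxy : (supportGraph z).Adj x y) : ∃ w ≠ y, (supportGraph z).Adj x w := by
  obtain ⟨h, hne⟩ := supportGraph_adj.1 hxy
  by_contra! hcon
  have hsum := congrFun hz x
  rw [chainBoundary_apply, sum_eq_single_of_mem ⟨s(x, y), h⟩ (by simp)] at hsum
  · exact hne hsum
  · rintro ⟨e, he⟩ hxe hey
    obtain ⟨w, rfl⟩ := (mem_filter.1 hxe).2
    have hwy : w ≠ y := by rintro rfl; exact hey rfl
    by_contra hze
    exact hcon w hwy (supportGraph_adj.2 ⟨he, hze⟩)

theorem three_le_card_support_of_cycle {z : G.edgeSet → ZMod 2} (hz : chainBoundary G z = 0)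
    (hz0 : z ≠ 0) : 3 ≤ #{e | z e ≠ 0} := by
  classical
  rw [← card_edgeFinset_supportGraph]
  exact three_le_card_edgeFinset (supportGraph_ne_bot hz0) (exists_supportGraph_adj_ne hz)

theorem exists_triangle_of_card_support_eq_three {z : G.edgeSet → ZMod 2}
    (hz : chainBoundary G z = 0) (hcard : #{e | z e ≠ 0} = 3) :
    ∃ x y w, G.Adj x y ∧ G.Adj x w ∧ G.Adj y w ∧
      ∀ e, z e ≠ 0 → e.1 = s(x, y) ∨ e.1 = s(x, w) ∨ e.1 = s(y, w) := by
  classical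
  rw [← card_edgeFinset_supportGraph] at hcard
  obtain ⟨x, y, w, h⟩ := exists_edgeFinset_eq_triangle hcard (exists_supportGraph_adj_ne hz)
  have hadj : ∀ a b, s(a, b) ∈ (supportGraph z).edgeFinset → G.Adj a b := fun a b hab =>
    (supportGraph_adj.1 (SimpleGraph.mem_edgeFinset.1 hab)).1
  refine ⟨x, y, w, hadj _ _ (by simp [h]), hadj _ _ (by simp [h]), hadj _ _ (by simp [h]), ?_⟩
  intro e he
  have := SimpleGraph.mem_edgeFinset.2 ((mem_edgeSet_supportGraph e).2 he)
  simpa [h] using this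

/-- MacLane's condition: a basis of the mod 2 cycle space of `G` in which every edge lies in the
support of at most two members, such as the bounded faces of a plane graph. -/
structure IsTwoBasis {κ : Type*} [Fintype κ] (G : SimpleGraph V) [DecidableRel G.Adj]
    (f : κ → G.edgeSet → ZMod 2) : Prop where
  linearIndependent : LinearIndependent (ZMod 2) f
  span_range_eq : Submodule.span (ZMod 2) (Set.range f) = LinearMap.ker (chainBoundary G)
  card_le_two : ∀ e, #{i | f i e ≠ 0} ≤ 2

/-- An algebraic dual of `G`: the cycle space of `G` is the cut space of a multigraph with the
same edges, the edge `e` joining the dual vertices `a e` and `b e`. -/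
def HasAlgebraicDual (G : SimpleGraph V) [DecidableRel G.Adj] : Prop :=
  ∃ (F : Type) (a b : G.edgeSet → F), Function.Exact
    (LinearMap.funLeft (ZMod 2) (ZMod 2) a + LinearMap.funLeft (ZMod 2) (ZMod 2) b)
    (chainBoundary G)

theorem finrank_range_chainBoundary_add_one_le [Nonempty V] (G : SimpleGraph V)
    [DecidableRel G.Adj] :
    Module.finrank (ZMod 2) (LinearMap.range (chainBoundary G)) + 1 ≤ Fintype.card V := by
  let ε : Module.Dual (ZMod 2) (V → ZMod 2) := ∑ v, LinearMap.proj v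
  have hε : ε ≠ 0 := fun h => by
    simpa [ε] using LinearMap.congr_fun h (Pi.single (Classical.arbitrary V) 1)
  have hle : LinearMap.range (chainBoundary G) ≤ LinearMap.ker ε := by
    rintro _ ⟨z, rfl⟩
    have hedge (e : G.edgeSet) : ∑ v, (if v ∈ e.1 then 1 else 0 : ZMod 2) = 0 := by
      have hends : #{v | v ∈ e.1} = 2 := by
        rw [← Sym2.card_toFinset_of_not_isDiag e.1 (G.not_isDiag_of_mem_edgeSet e.2)]
        congr 1
        ext
        simp
      rw [sum_boole, hends]
      rfl
    simp only [LinearMap.mem_ker, ε, LinearMap.sum_apply, LinearMap.proj_apply, chainBoundary,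
      Fintype.linearCombination_apply, Finset.sum_apply, Pi.smul_apply]
    rw [sum_comm]
    refine sum_eq_zero fun e _ => ?_
    rw [← smul_sum, hedge, smul_zero]
  have := Submodule.finrank_mono hle
  have := Module.Dual.finrank_ker_add_one_of_ne_zero hε
  simp only [Module.finrank_fintype_fun_eq_card] at this
  omega

theorem HasAlgebraicDual.exists_isTwoBasis (hG : HasAlgebraicDual G) :
    ∃ (κ : Type) (_ : Fintype κ) (f : κ → G.edgeSet → ZMod 2), IsTwoBasis G f := by
  classical
  obtain ⟨F, a, b, hab⟩ := hG
  set cob := LinearMap.funLeft (ZMod 2) (ZMod 2) a + LinearMap.funLeft (ZMod 2) (ZMod 2) b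
  let cut (φ : F) : G.edgeSet → ZMod 2 := cob (Pi.single φ 1)
  have cut_apply (φ : F) (e : G.edgeSet) (h : cut φ e ≠ 0) : φ = a e ∨ φ = b e := by
    contrapose! h
    simp [cut, cob, h.1.symm, h.2.symm]
  have hspan : Submodule.span (ZMod 2) (Set.range cut) = LinearMap.ker (chainBoundary G) := by
    rw [hab.linearMap_ker_eq]
    refine le_antisymm (Submodule.span_le.2 ?_) ?_
    · rintro _ ⟨φ, rfl⟩
      exact ⟨_, rfl⟩
    · rintro _ ⟨c, rfl⟩
      have hc : cob c = ∑ φ ∈ univ.image a ∪ univ.image b, c φ • cut φ := by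
        ext e
        simp [cut, cob, Pi.single_apply, sum_add_distrib]
      rw [hc]
      exact Submodule.sum_mem _ fun φ _ =>
        Submodule.smul_mem _ _ (Submodule.subset_span ⟨φ, rfl⟩)
  obtain ⟨κ, g, hg, hspan', hli⟩ := exists_linearIndependent' (ZMod 2) cut
  have := hli.finite
  have := Fintype.ofFinite κ
  refine ⟨κ, this, cut ∘ g, hli, hspan'.trans hspan, fun e => ?_⟩
  calc #{i | (cut ∘ g) i e ≠ 0} ≤ #{a e, b e} :=
        card_le_card_of_injOn g (fun i hi => by
          simpa using cut_apply (g i) e (by simpa using hi)) hg.injOn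
    _ ≤ 2 := card_le_two

namespace IsTwoBasis

variable {κ : Type*} [Fintype κ] {f : κ → G.edgeSet → ZMod 2}

theorem chainBoundary_eq_zero (hf : IsTwoBasis G f) (i : κ) : chainBoundary G (f i) = 0 := by
  rw [← LinearMap.mem_ker, ← hf.span_range_eq]
  exact Submodule.subset_span ⟨i, rfl⟩

theorem three_le_card_support (hf : IsTwoBasis G f) (i : κ) : 3 ≤ #{e | f i e ≠ 0} :=
  three_le_card_support_of_cycle (hf.chainBoundary_eq_zero i) (hf.linearIndependent.ne_zero i)

theorem card_edgeFinset_add_one_le [Nonempty V] (hf : IsTwoBasis G f) :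
    #G.edgeFinset + 1 ≤ Fintype.card κ + Fintype.card V := by
  have hrank := LinearMap.finrank_range_add_finrank_ker (chainBoundary G)
  rw [← hf.span_range_eq, finrank_span_eq_card hf.linearIndependent,
    Module.finrank_fintype_fun_eq_card, ← SimpleGraph.edgeFinset_card] at hrank
  have := finrank_range_chainBoundary_add_one_le G
  omega

/-- The sum of the cycles in `K` plays the role of the outer face: it is a nonzero cycle, and an
edge in its support lies in only one member of `K`. -/
theorem sum_card_support_add_three_le (hf : IsTwoBasis G f) {K : Finset κ} (hK : K.Nonempty)
    {E : Finset G.edgeSet} (hE : ∀ i ∈ K, ∀ e, f i e ≠ 0 → e ∈ E) :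
    ∑ i ∈ K, #{e | f i e ≠ 0} + 3 ≤ 2 * #E := by
  set y := ∑ i ∈ K, f i with hy
  have hy0 : y ≠ 0 := fun h => by
    obtain ⟨i, hi⟩ := hK
    exact one_ne_zero (linearIndependent_iff'.1 hf.linearIndependent K (fun _ => 1)
      (by simpa [hy] using h) i hi)
  have hycycle : chainBoundary G y = 0 := by simp [hy, hf.chainBoundary_eq_zero]
  have hyE : ({e | y e ≠ 0} : Finset _) ⊆ E := fun e he => by
    obtain ⟨i, hi, hie⟩ : ∃ i ∈ K, f i e ≠ 0 :=
      exists_ne_zero_of_sum_ne_zero (by simpa [hy] using he)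
    exact hE i hi e hie
  have hcount : ∑ i ∈ K, #{e | f i e ≠ 0} = ∑ e ∈ E, #{i ∈ K | f i e ≠ 0} := by
    refine Eq.trans (sum_congr rfl fun i hi => congrArg _ ?_)
      (sum_card_bipartiteAbove_eq_sum_card_bipartiteBelow fun i e => f i e ≠ 0)
    ext e
    simpa [mem_bipartiteAbove] using hE i hi e
  have hdeg (e : G.edgeSet) : #{i ∈ K | f i e ≠ 0} + (if y e ≠ 0 then 1 else 0) ≤ 2 := by
    have hle : #{i ∈ K | f i e ≠ 0} ≤ 2 :=
      (card_le_card (filter_subset_filter _ K.subset_univ)).trans (hf.card_le_two e)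
    have hye : y e = #{i ∈ K | f i e ≠ 0} := by
      rw [hy, Finset.sum_apply, ← sum_boole]
      exact sum_congr rfl fun i _ => by generalize f i e = c; decide +revert
    have htwo : #{i ∈ K | f i e ≠ 0} = 2 → y e = 0 := fun h => by rw [hye, h]; rfl
    split_ifs with hz <;> grind
  calc ∑ i ∈ K, #{e | f i e ≠ 0} + 3
      ≤ ∑ e ∈ E, #{i ∈ K | f i e ≠ 0} + #{e | y e ≠ 0} := by
        rw [hcount]
        exact Nat.add_le_add_left (three_le_card_support_of_cycle hycycle hy0) _
    _ = ∑ e ∈ E, (#{i ∈ K | f i e ≠ 0} + if y e ≠ 0 then 1 else 0) := by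
        rw [sum_add_distrib, ← card_filter]
        congr 2
        ext e
        simpa using @hyE e
    _ ≤ ∑ e ∈ E, 2 := sum_le_sum fun e _ => hdeg e
    _ = 2 * #E := by rw [sum_const, smul_eq_mul, mul_comm]

theorem two_mul_card_edgeFinset_le (hf : IsTwoBasis G f) :
    2 * #G.edgeFinset ≤ #{i | #{e | f i e ≠ 0} = 3} + 4 * Fintype.card V := by
  rcases isEmpty_or_nonempty V with hV | hV
  · simp [Subsingleton.elim G ⊥, SimpleGraph.edgeFinset]
  have heuler := hf.card_edgeFinset_add_one_le
  have hlong : ∑ i : κ, 4 ≤ ∑ i, (#{e | f i e ≠ 0} + if #{e | f i e ≠ 0} = 3 then 1 else 0) :=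
    sum_le_sum fun i _ => by have := hf.three_le_card_support i; grind
  rw [sum_add_distrib, ← card_filter, sum_const, smul_eq_mul,
    card_univ] at hlong
  rcases isEmpty_or_nonempty κ with hκ | hκ
  · simp only [Fintype.card_eq_zero] at heuler
    omega
  · have hfaces := hf.sum_card_support_add_three_le univ_nonempty
      (E := univ) fun _ _ _ _ => mem_univ _
    rw [card_univ, ← SimpleGraph.edgeFinset_card] at hfaces
    omega

theorem three_mul_card_triangles_add_le (hf : IsTwoBasis G f) {T : Finset κ}
    (hT : ∀ i ∈ T, #{e | f i e ≠ 0} = 3) {E : Finset G.edgeSet}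
    (hE : ∀ i ∈ T, ∀ e, f i e ≠ 0 → e ∈ E) {k : ℕ} (hk : 1 ≤ k) (hEk : #E ≤ 3 * k) :
    3 * k * #T + #E ≤ 2 * k * #E := by
  rcases T.eq_empty_or_nonempty with rfl | hne
  · rw [card_empty]
    nlinarith
  · have := hf.sum_card_support_add_three_le hne hE
    rw [sum_congr rfl hT, sum_const, smul_eq_mul] at this
    nlinarith

/-- A triangular face has a single label, so the triangular faces are counted label by label. -/
theorem three_mul_card_triangles_add_le_of_label (hf : IsTwoBasis G f) {ι : Type*} [Finite ι]
    [DecidableEq ι] {lab : Sym2 V → ι} (htri : ∀ x y w, G.Adj x y → G.Adj x w → G.Adj y w →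
      lab s(x, y) = lab s(x, w) ∧ lab s(x, y) = lab s(y, w))
    {k : ℕ} (hk : 1 ≤ k) (hlab : ∀ u, #{e : G.edgeSet | lab e = u} ≤ 3 * k) :
    3 * k * #{i | #{e | f i e ≠ 0} = 3} + #G.edgeFinset ≤ 2 * k * #G.edgeFinset := by
  have := Fintype.ofFinite ι
  set T : Finset κ := {i | #{e | f i e ≠ 0} = 3} with hT
  have hmono (i : κ) : ∃ u, i ∈ T → ∀ e, f i e ≠ 0 → lab e = u := by
    by_cases hi : i ∈ T
    · obtain ⟨x, y, w, hxy, hxw, hyw, h⟩ := exists_triangle_of_card_support_eq_three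
        (hf.chainBoundary_eq_zero i) (mem_filter.1 hi).2
      refine ⟨lab s(x, y), fun _ e he => ?_⟩
      have := htri x y w hxy hxw hyw
      rcases h e he with h | h | h <;> rw [h] <;> tauto
    · obtain ⟨e, -⟩ := Function.ne_iff.1 (hf.linearIndependent.ne_zero i)
      exact ⟨lab e, fun h => absurd h hi⟩
  choose L hL using hmono
  have hclass (u : ι) : 3 * k * #{i ∈ T | L i = u} + #{e : G.edgeSet | lab e = u} ≤
      2 * k * #{e : G.edgeSet | lab e = u} := by
    refine hf.three_mul_card_triangles_add_le ?_ ?_ hk (hlab u)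
    · exact fun i hi => (mem_filter.1 (mem_filter.1 hi).1).2
    · intro i hi e he
      obtain ⟨hiT, rfl⟩ := mem_filter.1 hi
      simpa using hL i hiT e he
  have hsum := sum_le_sum fun u (_ : u ∈ univ) => hclass u
  rwa [sum_add_distrib, ← mul_sum, ← mul_sum,
    ← card_eq_sum_card_fiberwise fun _ _ => mem_coe.2 (mem_univ _),
    ← card_eq_sum_card_fiberwise fun _ _ => mem_coe.2 (mem_univ _),
    card_univ, ← SimpleGraph.edgeFinset_card] at hsum

end IsTwoBasis

namespace HasAlgebraicDual

theorem card_edgeFinset_add_six_le (hG : HasAlgebraicDual G) {N : ℕ}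
    (hV : Fintype.card V ≤ N) (hN : 3 ≤ N) : #G.edgeFinset + 6 ≤ 3 * N := by
  rcases isEmpty_or_nonempty V with h | h
  · rw [SimpleGraph.edgeFinset_card, Fintype.card_eq_zero]
    omega
  obtain ⟨κ, _, f, hf⟩ := hG.exists_isTwoBasis
  have heuler := hf.card_edgeFinset_add_one_le
  rcases isEmpty_or_nonempty κ with hκ | hκ
  · simp only [Fintype.card_eq_zero] at heuler
    omega
  · have hfaces := hf.sum_card_support_add_three_le univ_nonempty
      (E := univ) fun _ _ _ _ => mem_univ _
    have hlong : ∑ i : κ, 3 ≤ ∑ i, #{e | f i e ≠ 0} :=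
      sum_le_sum fun i _ => hf.three_le_card_support i
    simp only [sum_const, card_univ, smul_eq_mul,
      ← SimpleGraph.edgeFinset_card] at hfaces hlong
    omega

theorem card_edgeFinset_le_of_label (hG : HasAlgebraicDual G) {ι : Type*} [Finite ι]
    [DecidableEq ι] {lab : Sym2 V → ι} (htri : ∀ x y w, G.Adj x y → G.Adj x w → G.Adj y w →
      lab s(x, y) = lab s(x, w) ∧ lab s(x, y) = lab s(y, w))
    {k : ℕ} (hk : 1 ≤ k) (hlab : ∀ u, #{e : G.edgeSet | lab e = u} ≤ 3 * k) :
    (4 * k + 1) * #G.edgeFinset ≤ 12 * k * Fintype.card V := by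
  obtain ⟨κ, _, f, hf⟩ := hG.exists_isTwoBasis
  have htriangles := hf.three_mul_card_triangles_add_le_of_label htri hk hlab
  have heuler := hf.two_mul_card_edgeFinset_le
  nlinarith

end HasAlgebraicDual

end CycleSpace

section Grid

/-- An edge of the square grid on `ℤ × ℤ`: `(p, d)` is the edge leaving `p` to the right if
`d = false` and upwards if `d = true`. -/
abbrev GridEdge := (ℤ × ℤ) × Bool

/-- The unit vector in the horizontal (`false`) or vertical (`true`) direction. -/
def gridStep : Bool → ℤ × ℤ
  | false => (1, 0)
  | true => (0, 1)

/-- The endpoint of a grid edge other than `g.1`. -/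
def GridEdge.target (g : GridEdge) : ℤ × ℤ := g.1 + gridStep g.2

/-- The second of the two unit squares next to a grid edge. Squares are named by their lower left
corner, so the first one is `g.1`. -/
def GridEdge.face (g : GridEdge) : ℤ × ℤ := g.1 - gridStep (!g.2)

/-- The graph of the square grid on `ℤ × ℤ`. -/
def gridGraph : SimpleGraph (ℤ × ℤ) :=
  SimpleGraph.fromEdgeSet (Set.range fun g : GridEdge => s(g.1, g.target))

/-- The mod 2 boundary of a 1-chain of the grid. Chains need not have finite support. -/
def gridBoundary : (GridEdge → ZMod 2) →ₗ[ZMod 2] (ℤ × ℤ → ZMod 2) :=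
  ∑ d, (LinearMap.funLeft _ _ (fun p => (p, d)) +
    LinearMap.funLeft _ _ fun p => (p - gridStep d, d))

/-- The map sending a set of unit squares to its boundary edges, mod 2. -/
def gridCoboundary : (ℤ × ℤ → ZMod 2) →ₗ[ZMod 2] (GridEdge → ZMod 2) :=
  LinearMap.funLeft _ _ Prod.fst + LinearMap.funLeft _ _ GridEdge.face

theorem gridBoundary_apply (w : GridEdge → ZMod 2) (i j : ℤ) :
    gridBoundary w (i, j) =
      w ((i, j), true) + w ((i, j - 1), true) + (w ((i, j), false) + w ((i - 1, j), false)) := by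
  simp [gridBoundary, gridStep]

theorem gridCoboundary_apply (c : ℤ × ℤ → ZMod 2) (g : GridEdge) :
    gridCoboundary c g = c g.1 + c g.face := rfl

theorem exists_add_sub_one_eq (f : ℤ → ZMod 2) : ∃ F : ℤ → ZMod 2, ∀ i, F i + F (i - 1) = f i := by
  refine ⟨fun i => ∑ x ∈ Ioc 0 i, f x + ∑ x ∈ Ioc i 0, f x, fun i => ?_⟩
  beta_reduce
  rcases lt_or_ge 0 i with h | h
  · rw [Ioc_eq_empty_of_le h.le, Ioc_eq_empty_of_le (b := 0) (by omega),
      ← insert_Ioc_sub_one_right_eq_Ioc h, sum_insert (by simp)]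
    linear_combination CharTwo.add_self_eq_zero (∑ x ∈ Ioc 0 (i - 1), f x)
  · have hIoc : Ioc (i - 1) 0 = insert i (Ioc i 0) := by ext x; simp; omega
    rw [Ioc_eq_empty_of_le h, Ioc_eq_empty_of_le (b := i - 1) (by omega), hIoc,
      sum_insert (by simp)]
    linear_combination CharTwo.add_self_eq_zero (∑ x ∈ Ioc i 0, f x)

theorem gridBoundary_gridCoboundary (c : ℤ × ℤ → ZMod 2) : gridBoundary (gridCoboundary c) = 0 := by
  ext ⟨i, j⟩
  simp only [gridBoundary_apply, gridCoboundary_apply, GridEdge.face, gridStep, Bool.not_false,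
    Bool.not_true, Prod.mk_sub_mk, sub_zero, Pi.zero_apply]
  generalize c (i, j) = a, c (i, j - 1) = b, c (i - 1, j) = a', c (i - 1, j - 1) = b'
  decide +revert

/-- The potential `c` is determined by its values on the row `j = 0`, where it integrates the
vertical edges, and by integrating the horizontal edges along each column. -/
theorem exists_gridCoboundary_eq {w : GridEdge → ZMod 2} (hw : gridBoundary w = 0) :
    ∃ c, gridCoboundary c = w := by
  obtain ⟨r, hr⟩ := exists_add_sub_one_eq fun i => w ((i, 0), true)
  choose h hh using fun i => exists_add_sub_one_eq fun j => w ((i, j), false)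
  let c : ℤ × ℤ → ZMod 2 := fun p => r p.1 + h p.1 p.2 + h p.1 0
  have horizontal (i j : ℤ) : c (i, j) + c (i, j - 1) = w ((i, j), false) := by
    rw [← hh i j]
    linear_combination CharTwo.add_self_eq_zero (r i + h i 0)
  have step (i j : ℤ) : c (i, j) + c (i - 1, j) + w ((i, j), true) =
      c (i, j - 1) + c (i - 1, j - 1) + w ((i, j - 1), true) := by
    have hcycle := congrFun hw (i, j)
    rw [gridBoundary_apply, ← horizontal, ← horizontal, Pi.zero_apply] at hcycle
    rw [← CharTwo.add_eq_zero, ← hcycle]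
    ring
  have vertical (i j : ℤ) : c (i, j) + c (i - 1, j) = w ((i, j), true) := by
    rw [← CharTwo.add_eq_zero]
    induction j using Int.induction_on with
    | zero =>
      rw [← hr i]
      linear_combination CharTwo.add_self_eq_zero (r i + r (i - 1) + h i 0 + h (i - 1) 0)
    | succ j ih => simpa [ih] using step i (j + 1)
    | pred j ih => rw [← step, ih]
  refine ⟨c, funext ?_⟩
  rintro ⟨⟨i, j⟩, _ | _⟩
  · simpa [gridCoboundary_apply, GridEdge.face, gridStep] using horizontal i j
  · simpa [gridCoboundary_apply, GridEdge.face, gridStep] using vertical i j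

theorem exact_gridCoboundary_gridBoundary : Function.Exact gridCoboundary gridBoundary := fun _ =>
  ⟨exists_gridCoboundary_eq, by rintro ⟨c, rfl⟩; exact gridBoundary_gridCoboundary c⟩

theorem gridBoundary_single (g : GridEdge) :
    gridBoundary (Pi.single g 1) = Pi.single g.1 1 + Pi.single g.target 1 := by
  obtain ⟨⟨a, b⟩, _ | _⟩ := g <;> ext ⟨i, j⟩ <;>
    simp [gridBoundary_apply, GridEdge.target, gridStep, Pi.single_apply, sub_eq_iff_eq_add]

theorem gridGraph_adj {p q : ℤ × ℤ} :
    gridGraph.Adj p q ↔ ∃ g : GridEdge, s(g.1, g.target) = s(p, q) := by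
  rw [gridGraph, SimpleGraph.fromEdgeSet_adj, Set.mem_range, and_iff_left_of_imp]
  rintro ⟨⟨p', d⟩, h⟩ rfl
  have hdiag : s(p', p' + gridStep d).IsDiag := (congrArg Sym2.IsDiag h).mpr rfl
  cases d <;> simp [gridStep] at hdiag

theorem exists_gridBoundary_eq_of_reachable {B : Set (ℤ × ℤ)} {p q : B}
    (h : (gridGraph.induce B).Reachable p q) :
    ∃ w : GridEdge → ZMod 2, (∀ g, w g ≠ 0 → g.1 ∈ B ∧ g.target ∈ B) ∧
      gridBoundary w = Pi.single p.1 1 + Pi.single q.1 1 := by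
  obtain ⟨walk⟩ := h
  induction walk with
  | nil => exact ⟨0, by simp, by simp [CharTwo.add_self_eq_zero]⟩
  | @cons p q r hpq _ ih =>
    obtain ⟨w, hw, hwb⟩ := ih
    obtain ⟨g, hg⟩ := gridGraph_adj.1 hpq
    have hends : g.1 ∈ B ∧ g.target ∈ B := by
      rcases Sym2.eq_iff.1 hg with ⟨h, h'⟩ | ⟨h, h'⟩ <;> simp [h, h']
    have hsingle : gridBoundary (Pi.single g 1) = Pi.single p.1 1 + Pi.single q.1 1 := by
      rw [gridBoundary_single]
      rcases Sym2.eq_iff.1 hg with ⟨h, h'⟩ | ⟨h, h'⟩ <;> simp [h, h', add_comm]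
    refine ⟨Pi.single g 1 + w, fun g' hg' => ?_, ?_⟩
    · by_cases hgg : g' = g
      · exact hgg ▸ hends
      · exact hw g' (by simpa [hgg] using hg')
    · rw [map_add, hwb, hsingle]
      linear_combination CharTwo.add_self_eq_zero (Pi.single q.1 1 : ℤ × ℤ → ZMod 2)

end Grid

section GridModel

/-- The graph on `V` in which `u` and `v` are adjacent when some edge of `Γ` joins the sets
`B u` and `B v`. -/
def contactGraph {V P : Type*} (Γ : SimpleGraph P) (B : V → Set P) : SimpleGraph V :=
  SimpleGraph.fromRel fun u v => ∃ p ∈ B u, ∃ q ∈ B v, Γ.Adj p q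

theorem contactGraph_adj {V P : Type*} {Γ : SimpleGraph P} {B : V → Set P} {u v : V} :
    (contactGraph Γ B).Adj u v ↔ u ≠ v ∧ ∃ p ∈ B u, ∃ q ∈ B v, Γ.Adj p q := by
  rw [contactGraph, SimpleGraph.fromRel_adj, and_congr_right_iff, or_iff_left_iff_imp]
  rintro - ⟨p, hp, q, hq, h⟩
  exact ⟨q, hq, p, hp, h.symm⟩

variable {V : Type*}

/-- `B` exhibits `G` as a subgraph of a minor of the grid, its vertices being represented by
disjoint finite connected sets. -/
structure IsGridModel (G : SimpleGraph V) (B : V → Set (ℤ × ℤ)) : Prop where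
  finite : ∀ v, (B v).Finite
  connected : ∀ v, (gridGraph.induce (B v)).Connected
  disjoint : Pairwise (Function.onFun Disjoint B)
  le_contactGraph : G ≤ contactGraph gridGraph B

namespace IsGridModel

variable {G : SimpleGraph V} {B : V → Set (ℤ × ℤ)}

theorem eq_of_mem (h : IsGridModel G B) {u v : V} {p : ℤ × ℤ} (hu : p ∈ B u) (hv : p ∈ B v) :
    u = v := by
  by_contra huv
  exact Set.disjoint_left.1 (h.disjoint huv) hu hv

theorem comap {W : Type*} {H : SimpleGraph W} (h : IsGridModel G B) (φ : H →g G)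
    (hφ : Function.Injective φ) : IsGridModel H (B ∘ φ) where
  finite v := h.finite (φ v)
  connected v := h.connected (φ v)
  disjoint _ _ huv := h.disjoint (hφ.ne huv)
  le_contactGraph u v huv := by
    have := contactGraph_adj.1 (h.le_contactGraph (φ.map_adj huv))
    exact contactGraph_adj.2 ⟨huv.ne, this.2⟩

/-- The grid edges joining two points of the same set `B v`. -/
def internalEdges (B : V → Set (ℤ × ℤ)) : Set GridEdge := {g | ∃ v, g.1 ∈ B v ∧ g.target ∈ B v}

/-- A choice, for each edge `uv` of `G`, of a grid edge joining `B u` and `B v`. -/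
def IsEdgeChoice (G : SimpleGraph V) (B : V → Set (ℤ × ℤ)) (γ : G.edgeSet → GridEdge) : Prop :=
  ∀ e, ∃ u v, e.1 = s(u, v) ∧ (γ e).1 ∈ B u ∧ (γ e).target ∈ B v

theorem exists_isEdgeChoice (h : IsGridModel G B) : ∃ γ, IsEdgeChoice G B γ := by
  have (e : G.edgeSet) : ∃ g : GridEdge, ∃ u v, e.1 = s(u, v) ∧ g.1 ∈ B u ∧ g.target ∈ B v := by
    obtain ⟨⟨u, v⟩, huv⟩ := e
    obtain ⟨-, p, hp, q, hq, hpq⟩ := contactGraph_adj.1 (h.le_contactGraph huv)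
    obtain ⟨g, hg⟩ := gridGraph_adj.1 hpq
    rcases Sym2.eq_iff.1 hg with ⟨rfl, rfl⟩ | ⟨rfl, rfl⟩
    · exact ⟨g, u, v, rfl, hp, hq⟩
    · exact ⟨g, v, u, Sym2.eq_swap, hq, hp⟩
  choose γ hγ using this
  exact ⟨γ, hγ⟩

namespace IsEdgeChoice

variable {γ : G.edgeSet → GridEdge}

theorem injective (hγ : IsEdgeChoice G B γ) (h : IsGridModel G B) : Function.Injective γ := by
  intro e e' hee
  obtain ⟨u, v, he, hu, hv⟩ := hγ e
  obtain ⟨u', v', he', hu', hv'⟩ := hγ e'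
  rw [← hee] at hu' hv'
  exact Subtype.ext (by rw [he, he', h.eq_of_mem hu hu', h.eq_of_mem hv hv'])

theorem notMem_internalEdges (hγ : IsEdgeChoice G B γ) (h : IsGridModel G B) (e : G.edgeSet) :
    γ e ∉ internalEdges B := by
  rintro ⟨w, hw, hw'⟩
  obtain ⟨u, v, he, hu, hv⟩ := hγ e
  refine G.not_isDiag_of_mem_edgeSet e.2 ?_
  rw [he, h.eq_of_mem hu hw, h.eq_of_mem hv hw']
  rfl

variable [Fintype V] [DecidableEq V]

theorem exists_gridBoundary_eq (hγ : IsEdgeChoice G B γ) (h : IsGridModel G B) {root : V → ℤ × ℤ}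
    (hroot : ∀ v, root v ∈ B v) (e : G.edgeSet) :
    ∃ w : GridEdge → ZMod 2, (∀ g, w g ≠ 0 → g = γ e ∨ g ∈ internalEdges B) ∧ w (γ e) = 1 ∧
      gridBoundary w = ∑ v, (if v ∈ e.1 then 1 else 0 : ZMod 2) • Pi.single (root v) 1 := by
  obtain ⟨x, y, he, hx, hy⟩ := hγ e
  have hxy : x ≠ y := by rintro rfl; exact G.not_isDiag_of_mem_edgeSet e.2 (he ▸ rfl)
  have hpath {v p} (hp : p ∈ B v) := exists_gridBoundary_eq_of_reachable
    ((h.connected v).preconnected ⟨p, hp⟩ ⟨root v, hroot v⟩)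
  obtain ⟨wx, hwx, hbx⟩ := hpath hx
  obtain ⟨wy, hwy, hby⟩ := hpath hy
  have hwx' (g) (hg : g ∉ internalEdges B) : wx g = 0 := by
    by_contra hne
    exact hg ⟨x, hwx g hne⟩
  have hwy' (g) (hg : g ∉ internalEdges B) : wy g = 0 := by
    by_contra hne
    exact hg ⟨y, hwy g hne⟩
  refine ⟨Pi.single (γ e) 1 + wx + wy, fun g hg => ?_, ?_, ?_⟩
  · by_contra! hcon
    exact hg (by simp [hcon.1, hwx' g hcon.2, hwy' g hcon.2])
  · have hnot := hγ.notMem_internalEdges h e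
    simp [hwx' _ hnot, hwy' _ hnot]
  · have hincident : ({v | v ∈ e.1} : Finset V) = {x, y} := by ext v; simp [he]
    simp only [map_add, gridBoundary_single, hbx, hby, ite_smul, one_smul, zero_smul]
    rw [← sum_filter, hincident, sum_pair hxy]
    linear_combination CharTwo.add_self_eq_zero
      (Pi.single (γ e).1 1 + Pi.single (γ e).target 1 : ℤ × ℤ → ZMod 2)

variable [DecidableRel G.Adj]

/-- Contracting the sets `B v` turns the boundary of the grid into the boundary of `G`. -/
theorem sum_gridBoundary (hγ : IsEdgeChoice G B γ) (h : IsGridModel G B) {w : GridEdge → ZMod 2}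
    (hw : ∀ g, w g ≠ 0 → g ∈ Set.range γ ∪ internalEdges B) (v : V) :
    ∑ p ∈ (h.finite v).toFinset, gridBoundary w p = chainBoundary G (w ∘ γ) v := by
  classical
  have hfin : (internalEdges B).Finite :=
    (Set.finite_iUnion fun v => (h.finite v).prod (Set.finite_univ (α := Bool))).subset
      fun g ⟨v, hv, _⟩ => Set.mem_iUnion.2 ⟨v, hv, Set.mem_univ _⟩
  have hdisj : Disjoint (univ.image γ) hfin.toFinset := by
    rw [disjoint_left]
    rintro g hg
    obtain ⟨e, -, rfl⟩ := mem_image.1 hg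
    simpa using hγ.notMem_internalEdges h e
  have hsum : w = ∑ g ∈ (univ.image γ).disjUnion hfin.toFinset hdisj,
      w g • Pi.single g 1 := by
    ext g
    simpa [Finset.sum_apply, Pi.single_apply] using not_imp_comm.1 (hw g)
  have hends (g : GridEdge) : ∑ p ∈ (h.finite v).toFinset, gridBoundary (Pi.single g 1) p =
      (if g.1 ∈ B v then 1 else 0) + if g.target ∈ B v then 1 else 0 := by
    simp [gridBoundary_single, Pi.single_apply, sum_add_distrib]
  have hinternal (g) (hg : g ∈ internalEdges B) : g.1 ∈ B v ↔ g.target ∈ B v := by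
    obtain ⟨u, hu, hu'⟩ := hg
    exact ⟨fun hv => h.eq_of_mem hu hv ▸ hu', fun hv => h.eq_of_mem hu' hv ▸ hu⟩
  have hcrossing (e : G.edgeSet) : (if (γ e).1 ∈ B v then 1 else 0 : ZMod 2) +
      (if (γ e).target ∈ B v then 1 else 0) = if v ∈ e.1 then 1 else 0 := by
    obtain ⟨x, y, he, hx, hy⟩ := hγ e
    have hxy : x ≠ y := by rintro rfl; exact G.not_isDiag_of_mem_edgeSet e.2 (he ▸ rfl)
    have hxv : (γ e).1 ∈ B v ↔ v = x := ⟨fun hv => h.eq_of_mem hv hx, fun hv => hv ▸ hx⟩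
    have hyv : (γ e).target ∈ B v ↔ v = y := ⟨fun hv => h.eq_of_mem hv hy, fun hv => hv ▸ hy⟩
    simp only [hxv, hyv, he, Sym2.mem_iff]
    grind
  conv_lhs => rw [hsum]
  simp only [map_sum, map_smul, Finset.sum_apply, Pi.smul_apply, smul_eq_mul]
  rw [sum_comm]
  simp only [← mul_sum, hends]
  rw [sum_disjUnion, sum_image (hγ.injective h).injOn, sum_eq_zero
    (s := hfin.toFinset), add_zero, chainBoundary_apply, sum_filter]
  · simp [hcrossing]
  · intro g hg
    simp [hinternal g (hfin.mem_toFinset.1 hg), CharTwo.add_self_eq_zero]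

theorem chainBoundary_eq_zero_iff (hγ : IsEdgeChoice G B γ) (h : IsGridModel G B)
    (z : G.edgeSet → ZMod 2) :
    chainBoundary G z = 0 ↔ ∃ w, gridBoundary w = 0 ∧
      (∀ g, w g ≠ 0 → g ∈ Set.range γ ∪ internalEdges B) ∧ w ∘ γ = z := by
  constructor
  · intro hz
    choose root hroot using fun v => Set.nonempty_coe_sort.1 (h.connected v).nonempty
    choose y hyγ hyone hyb using hγ.exists_gridBoundary_eq h hroot
    have hy (g) (hg : g ∉ internalEdges B) (e) (hge : g ≠ γ e) : y e g = 0 := by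
      by_contra hne
      exact (hyγ e g hne).elim hge hg
    refine ⟨∑ e, z e • y e, ?_, fun g hg => ?_, ?_⟩
    · have hz' (v : V) : ∑ e : G.edgeSet, z e • (if v ∈ e.1 then 1 else 0 : ZMod 2) = 0 := by
        simpa [chainBoundary_apply, sum_filter] using congrFun hz v
      simp only [map_sum, map_smul, hyb, smul_sum, ← smul_assoc]
      rw [sum_comm]
      simp only [← sum_smul, hz', zero_smul, sum_const_zero]
    · obtain ⟨e, -, he⟩ := exists_ne_zero_of_sum_ne_zero (by simpa using hg)
      exact (hyγ e g (right_ne_zero_of_mul he)).imp (fun hge => ⟨e, hge.symm⟩) id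
    · ext e
      have hnot := hγ.notMem_internalEdges h e
      rw [Function.comp_apply, Finset.sum_apply, sum_eq_single e]
      · simp [hyone]
      · intro e' _ he'
        simp [hy _ hnot e' fun hee => he' (hγ.injective h hee).symm]
      · simp
  · rintro ⟨w, hw, hsupp, rfl⟩
    ext v
    rw [← hγ.sum_gridBoundary h hsupp, hw]
    simp

end IsEdgeChoice

/-- The vertices of the dual are the unit squares, two squares being identified when the grid edge
between them is deleted in the minor `G`. -/
theorem hasAlgebraicDual [Fintype V] [DecidableEq V] [DecidableRel G.Adj] (h : IsGridModel G B) :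
    HasAlgebraicDual G := by
  obtain ⟨γ, hγ⟩ := h.exists_isEdgeChoice
  let deleted : Set GridEdge := (Set.range γ ∪ internalEdges B)ᶜ
  let r (p q : ℤ × ℤ) : Prop := ∃ g ∈ deleted, g.1 = p ∧ g.face = q
  refine ⟨Quot r, fun e => Quot.mk r (γ e).1, fun e => Quot.mk r (γ e).face, fun z => ?_⟩
  rw [hγ.chainBoundary_eq_zero_iff h]
  constructor
  · rintro ⟨w, hw, hsupp, rfl⟩
    obtain ⟨c, rfl⟩ := (exact_gridCoboundary_gridBoundary w).1 hw
    have hc (p q) (hpq : r p q) : c p = c q := by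
      obtain ⟨g, hg, rfl, rfl⟩ := hpq
      rw [← CharTwo.add_eq_zero, ← gridCoboundary_apply]
      by_contra hne
      exact hg (hsupp g hne)
    exact ⟨Quot.lift c hc, rfl⟩
  · rintro ⟨c, rfl⟩
    refine ⟨gridCoboundary (c ∘ Quot.mk r), gridBoundary_gridCoboundary _, fun g hg => ?_, rfl⟩
    by_contra hdel
    refine hg ?_
    rw [gridCoboundary_apply, Function.comp_apply, Function.comp_apply,
      Quot.sound ⟨g, hdel, rfl, rfl⟩, CharTwo.add_self_eq_zero]

end IsGridModel

end GridModel

section CoreSystem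

variable {P S T : Type*}

/-- Disjoint sets `D σ`, the cores, and sets `Y τ` meeting one another only within the cores. -/
structure IsCoreSystem (D : S → Set P) (Y : T → Set P) : Prop where
  disjoint : Pairwise (Function.onFun Disjoint D)
  inter_subset : Pairwise fun τ τ' => Y τ ∩ Y τ' ⊆ ⋃ σ, D σ

/-- An enlargement of the cores `D σ` of a core system to sets `B σ` which are still disjoint, are
connected in `Γ`, and grow only within the sets `Y τ` that meet `D σ`. -/
structure IsCoreExpansion (Γ : SimpleGraph P) (D : S → Set P) (Y : T → Set P)
    (B : S → Set P) : Prop where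
  core_subset : ∀ σ, D σ ⊆ B σ
  connected : ∀ σ, (Γ.induce (B σ)).Connected
  disjoint : Pairwise (Function.onFun Disjoint B)
  mem_core_or_exists_mem : ∀ {σ p}, p ∈ B σ → p ∈ D σ ∨ ∃ τ, (D σ ∩ Y τ).Nonempty ∧ p ∈ Y τ

variable {Γ : SimpleGraph P} {D B : S → Set P} {Y : T → Set P}

theorem IsCoreSystem.preimage {P' : Type*} (hs : IsCoreSystem D Y) (f : P' → P) :
    IsCoreSystem (fun σ => f ⁻¹' D σ) (fun τ => f ⁻¹' Y τ) where
  disjoint _ _ hσ := (hs.disjoint hσ).preimage f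
  inter_subset _ _ hτ := (Set.preimage_mono (hs.inter_subset hτ)).trans Set.preimage_iUnion.subset

theorem IsCoreSystem.isCoreExpansion_self (hs : IsCoreSystem D Y)
    (hD : ∀ σ, (Γ.induce (D σ)).Connected) : IsCoreExpansion Γ D Y D where
  core_subset _ := subset_rfl
  connected := hD
  disjoint := hs.disjoint
  mem_core_or_exists_mem := Or.inl

namespace IsCoreExpansion

theorem eq_of_mem (h : IsCoreExpansion Γ D Y B) {σ σ' : S} {p : P} (hp : p ∈ B σ)
    (hp' : p ∈ B σ') : σ = σ' := by
  by_contra hσ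
  exact Set.disjoint_left.1 (h.disjoint hσ) hp hp'

theorem inter_nonempty_of_mem (h : IsCoreExpansion Γ D Y B) (hs : IsCoreSystem D Y) {τ : T}
    {σ : S} {p : P} (hB : p ∈ B σ) (hY : p ∈ Y τ) : (D σ ∩ Y τ).Nonempty := by
  rcases h.mem_core_or_exists_mem hB with hD | ⟨τ', hστ, hY'⟩
  · exact ⟨p, hD, hY⟩
  · rcases eq_or_ne τ τ' with rfl | hne
    · exact hστ
    · obtain ⟨σ', hσ'⟩ := Set.mem_iUnion.1 (hs.inter_subset hne ⟨hY, hY'⟩)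
      exact h.eq_of_mem hB (h.core_subset σ' hσ') ▸ ⟨p, hσ', hY⟩

theorem update_insert [DecidableEq S] (h : IsCoreExpansion Γ D Y B) {τ : T} {σ : S} {b c : P}
    (hστ : (D σ ∩ Y τ).Nonempty) (hb : b ∈ B σ) (hbc : Γ.Adj b c) (hc : c ∈ Y τ)
    (hfree : ∀ σ', c ∉ B σ') :
    IsCoreExpansion Γ D Y (Function.update B σ (insert c (B σ))) where
  core_subset σ' := by
    rcases eq_or_ne σ' σ with rfl | hσ
    · simpa using (h.core_subset σ').trans (Set.subset_insert c _)
    · simpa [hσ] using h.core_subset σ'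
  connected σ' := by
    rcases eq_or_ne σ' σ with rfl | hσ
    · have hunion : insert c (B σ') = {b, c} ∪ B σ' := by
        rw [Set.pair_comm, Set.insert_union, Set.singleton_union, Set.insert_eq_of_mem hb]
      rw [Function.update_self, hunion]
      exact SimpleGraph.induce_union_connected
        (SimpleGraph.induce_pair_connected_of_adj hbc).preconnected (h.connected σ').preconnected
        ⟨b, by simp, hb⟩
    · rw [Function.update_of_ne hσ]
      exact h.connected σ'
  disjoint := by
    have key (σ' : S) (hσ : σ' ≠ σ) : Disjoint (insert c (B σ)) (B σ') :=
      Set.disjoint_insert_left.2 ⟨hfree σ', h.disjoint hσ.symm⟩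
    intro σ₁ σ₂ hne
    rcases eq_or_ne σ₁ σ with rfl | h₁
    · simpa [Function.onFun, hne.symm] using key σ₂ hne.symm
    rcases eq_or_ne σ₂ σ with rfl | h₂
    · simpa [Function.onFun, hne] using (key σ₁ hne).symm
    · simpa [Function.onFun, h₁, h₂] using h.disjoint hne
  mem_core_or_exists_mem {σ' p} hp := by
    rcases eq_or_ne σ' σ with rfl | hσ
    · rw [Function.update_self] at hp
      rcases hp with rfl | hp
      · exact Or.inr ⟨τ, hστ, hc⟩
      · exact h.mem_core_or_exists_mem hp
    · rw [Function.update_of_ne hσ] at hp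
      exact h.mem_core_or_exists_mem hp

theorem exists_mem_of_maximal (hB : Maximal (IsCoreExpansion Γ D Y) B) (hs : IsCoreSystem D Y)
    {τ : T} (hY : (Γ.induce (Y τ)).Preconnected) {σ₀ : S} (hσ₀ : (D σ₀ ∩ Y τ).Nonempty)
    {p : P} (hp : p ∈ Y τ) : ∃ σ, p ∈ B σ := by
  classical
  have step {b c : P} (hbY : b ∈ Y τ) (hcY : c ∈ Y τ) (hbc : Γ.Adj b c) (hb : ∃ σ, b ∈ B σ) :
      ∃ σ, c ∈ B σ := by
    obtain ⟨σ, hbσ⟩ := hb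
    by_contra! hfree
    have hστ := hB.prop.inter_nonempty_of_mem hs hbσ hbY
    have hgrown := hB.prop.update_insert hστ hbσ hbc hcY hfree
    have hle : B ≤ Function.update B σ (insert c (B σ)) :=
      le_update_iff.2 ⟨Set.subset_insert _ _, fun _ _ => le_rfl⟩
    exact hfree σ (hB.le_of_ge hgrown hle σ (by simp))
  obtain ⟨p₀, hp₀, hp₀Y⟩ := hσ₀
  obtain ⟨walk⟩ := hY ⟨p₀, hp₀Y⟩ ⟨p, hp⟩
  have propagate {x y : Y τ} (walk : (Γ.induce (Y τ)).Walk x y) (hx : ∃ σ, x.1 ∈ B σ) :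
      ∃ σ, y.1 ∈ B σ := by
    induction walk with
    | nil => exact hx
    | @cons x z _ hxz _ ih => exact ih (step x.2 z.2 hxz hx)
  exact propagate walk ⟨σ₀, hB.prop.core_subset σ₀ hp₀⟩

theorem preconnected_contactGraph (h : IsCoreExpansion Γ D Y B) (hs : IsCoreSystem D Y)
    {τ : T} (hY : (Γ.induce (Y τ)).Preconnected) (hcover : Y τ ⊆ ⋃ σ, B σ) :
    ((contactGraph Γ B).induce {σ | (D σ ∩ Y τ).Nonempty}).Preconnected := by
  have follow {x y : Y τ} (walk : (Γ.induce (Y τ)).Walk x y) (σ σ' : {σ | (D σ ∩ Y τ).Nonempty})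
      (hx : x.1 ∈ B σ) (hy : y.1 ∈ B σ') :
      ((contactGraph Γ B).induce {σ | (D σ ∩ Y τ).Nonempty}).Reachable σ σ' := by
    induction walk generalizing σ with
    | nil => rw [Subtype.ext (h.eq_of_mem hx hy)]
    | @cons x z _ hxz _ ih =>
      obtain ⟨ρ, hz⟩ := Set.mem_iUnion.1 (hcover z.2)
      lift ρ to {σ | (D σ ∩ Y τ).Nonempty} using h.inter_nonempty_of_mem hs hz z.2
      rcases eq_or_ne σ ρ with rfl | hσρ
      · exact ih σ hz hy
      · have hadj : (contactGraph Γ B).Adj σ ρ :=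
          contactGraph_adj.2 ⟨Subtype.coe_ne_coe.2 hσρ, x, hx, z, hz, hxz⟩
        exact (SimpleGraph.Adj.reachable (G := (contactGraph Γ B).induce _) hadj).trans (ih ρ hz hy)
  rintro ⟨σ, p, hp, hpY⟩ ⟨σ', q, hq, hqY⟩
  obtain ⟨walk⟩ := hY ⟨p, hpY⟩ ⟨q, hqY⟩
  exact follow walk _ _ (h.core_subset σ hp) (h.core_subset σ' hq)

theorem finite_setOf [Finite S] [Finite T] (hD : ∀ σ, (D σ).Finite) (hY : ∀ τ, (Y τ).Finite) :
    {B | IsCoreExpansion Γ D Y B}.Finite := by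
  refine (Set.Finite.pi' fun _ : S =>
    ((Set.finite_iUnion hD).union (Set.finite_iUnion hY)).finite_subsets).subset ?_
  intro B hB σ p hp
  exact (hB.mem_core_or_exists_mem hp).imp (fun h => Set.mem_iUnion.2 ⟨σ, h⟩)
    fun ⟨τ, _, h⟩ => Set.mem_iUnion.2 ⟨τ, h⟩

theorem finite [Finite T] (h : IsCoreExpansion Γ D Y B) (hY : ∀ τ, (Y τ).Finite) {σ : S}
    (hD : (D σ).Finite) : (B σ).Finite :=
  (hD.union (Set.finite_iUnion hY)).subset fun _ hp =>
    (h.mem_core_or_exists_mem hp).imp_right fun ⟨τ, _, hτ⟩ => Set.mem_iUnion.2 ⟨τ, hτ⟩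

end IsCoreExpansion

/-- The enlargement is obtained by growing the cores as far as possible. -/
theorem IsCoreSystem.exists_preconnected_contactGraph [Finite S] [Finite T]
    (hs : IsCoreSystem D Y) (hDfin : ∀ σ, (D σ).Finite) (hYfin : ∀ τ, (Y τ).Finite)
    (hD : ∀ σ, (Γ.induce (D σ)).Connected) (hY : ∀ τ, (Γ.induce (Y τ)).Preconnected) :
    ∃ B, IsCoreExpansion Γ D Y B ∧
      ∀ τ, ((contactGraph Γ B).induce {σ | (D σ ∩ Y τ).Nonempty}).Preconnected := by
  obtain ⟨B, hB⟩ := (IsCoreExpansion.finite_setOf hDfin hYfin).exists_maximal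
    ⟨D, hs.isCoreExpansion_self hD⟩
  refine ⟨B, hB.prop, fun τ => ?_⟩
  by_cases hτ : ∃ σ, (D σ ∩ Y τ).Nonempty
  · obtain ⟨σ, hσ⟩ := hτ
    exact hB.prop.preconnected_contactGraph hs (hY τ) fun p hp =>
      Set.mem_iUnion.2 (IsCoreExpansion.exists_mem_of_maximal hB hs (hY τ) hσ hp)
  · exact fun σ => (hτ ⟨σ, σ.2⟩).elim

end CoreSystem

section Mesh

/-- The interval `[i / N, (i + 1) / N]`. -/
def gridInterval (N : ℝ) (i : ℤ) : Set ℝ := (N * ·) ⁻¹' Set.Icc (i : ℝ) (i + 1)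

/-- The closed squares of side `1 / N` tiling the plane. -/
def gridSquare (N : ℝ) (p : ℤ × ℤ) : Set (ℝ × ℝ) := gridInterval N p.1 ×ˢ gridInterval N p.2

/-- The squares of the mesh of side `1 / N` that meet `K`. -/
def gridCover (N : ℝ) (K : Set (ℝ × ℝ)) : Set (ℤ × ℤ) := {p | (gridSquare N p ∩ K).Nonempty}

theorem locallyFinite_gridInterval (N : ℝ) : LocallyFinite (gridInterval N) := by
  refine LocallyFinite.preimage_continuous (f := fun i : ℤ => Set.Icc (i : ℝ) (i + 1))
    (locallyFinite_Icc_of_tendsto tendsto_intCast_atTop_atTop ?_) (continuous_const_mul N)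
  exact Filter.tendsto_atBot_add_const_right _ _ (tendsto_intCast_atBot_iff.2 Filter.tendsto_id)

theorem isClosed_gridInterval (N : ℝ) (i : ℤ) : IsClosed (gridInterval N i) :=
  isClosed_Icc.preimage (continuous_const_mul N)

theorem exists_mem_gridInterval (N t : ℝ) : ∃ i, t ∈ gridInterval N i :=
  ⟨⌊N * t⌋, Int.floor_le _, (Int.lt_floor_add_one _).le⟩

theorem dist_le_of_mem_gridInterval {N : ℝ} (hN : 0 < N) {i : ℤ} {s t : ℝ}
    (hs : s ∈ gridInterval N i) (ht : t ∈ gridInterval N i) : dist s t ≤ 1 / N := by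
  have h : dist (N * s) (N * t) ≤ 1 := by simpa using Real.dist_le_of_mem_Icc hs ht
  rwa [le_div_iff₀' hN, ← abs_of_pos hN, ← Real.norm_eq_abs, ← dist_smul₀]

theorem le_add_one_of_mem_gridInterval {N : ℝ} {i j : ℤ} {t : ℝ} (hi : t ∈ gridInterval N i)
    (hj : t ∈ gridInterval N j) : i ≤ j + 1 := by
  exact_mod_cast hi.1.trans hj.2

theorem locallyFinite_gridSquare (N : ℝ) : LocallyFinite (gridSquare N) := fun x => by
  obtain ⟨U, hU, hUfin⟩ := locallyFinite_gridInterval N x.1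
  obtain ⟨U', hU', hUfin'⟩ := locallyFinite_gridInterval N x.2
  refine ⟨U ×ˢ U', prod_mem_nhds hU hU', (hUfin.prod hUfin').subset ?_⟩
  rintro p ⟨y, hp, hy⟩
  exact ⟨⟨y.1, hp.1, hy.1⟩, ⟨y.2, hp.2, hy.2⟩⟩

theorem isClosed_gridSquare (N : ℝ) (p : ℤ × ℤ) : IsClosed (gridSquare N p) :=
  (isClosed_gridInterval N p.1).prod (isClosed_gridInterval N p.2)

theorem exists_mem_gridSquare (N : ℝ) (x : ℝ × ℝ) : ∃ p, x ∈ gridSquare N p := by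
  obtain ⟨i, hi⟩ := exists_mem_gridInterval N x.1
  obtain ⟨j, hj⟩ := exists_mem_gridInterval N x.2
  exact ⟨(i, j), hi, hj⟩

theorem dist_le_of_mem_gridSquare {N : ℝ} (hN : 0 < N) {p : ℤ × ℤ} {x y : ℝ × ℝ}
    (hx : x ∈ gridSquare N p) (hy : y ∈ gridSquare N p) : dist x y ≤ 1 / N :=
  max_le (dist_le_of_mem_gridInterval hN hx.1 hy.1) (dist_le_of_mem_gridInterval hN hx.2 hy.2)

theorem gridCover_finite (N : ℝ) {K : Set (ℝ × ℝ)} (hK : IsCompact K) : (gridCover N K).Finite :=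
  (locallyFinite_gridSquare N).finite_nonempty_inter_compact hK

theorem gridCover_nonempty (N : ℝ) {K : Set (ℝ × ℝ)} (hK : K.Nonempty) :
    (gridCover N K).Nonempty := by
  obtain ⟨x, hx⟩ := hK
  obtain ⟨p, hp⟩ := exists_mem_gridSquare N x
  exact ⟨p, x, hp, hx⟩

theorem gridGraph_adj_horizontal {i i' : ℤ} (hne : i ≠ i') (h : i ≤ i' + 1) (h' : i' ≤ i + 1)
    (j : ℤ) : gridGraph.Adj (i, j) (i', j) := by
  rcases hne.lt_or_gt with hlt | hlt
  · exact gridGraph_adj.2 ⟨((i, j), false), by simp [GridEdge.target, gridStep]; omega⟩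
  · exact gridGraph_adj.2 ⟨((i', j), false), by simp [GridEdge.target, gridStep]; omega⟩

theorem gridGraph_adj_vertical {j j' : ℤ} (hne : j ≠ j') (h : j ≤ j' + 1) (h' : j' ≤ j + 1)
    (i : ℤ) : gridGraph.Adj (i, j) (i, j') := by
  rcases hne.lt_or_gt with hlt | hlt
  · exact gridGraph_adj.2 ⟨((i, j), true), by simp [GridEdge.target, gridStep]; omega⟩
  · exact gridGraph_adj.2 ⟨((i, j'), true), by simp [GridEdge.target, gridStep]; omega⟩

/-- Two squares meeting only in a corner are joined through a square next to both. -/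
theorem reachable_of_mem_gridSquare {N : ℝ} {K : Set (ℝ × ℝ)} {x : ℝ × ℝ} (hx : x ∈ K)
    {p q : gridCover N K} (hp : x ∈ gridSquare N p) (hq : x ∈ gridSquare N q) :
    (gridGraph.induce (gridCover N K)).Reachable p q := by
  obtain ⟨⟨i, j⟩, hpK⟩ := p
  obtain ⟨⟨i', j'⟩, hqK⟩ := q
  let corner : gridCover N K := ⟨(i', j), x, ⟨hq.1, hp.2⟩, hx⟩
  have horizontal : (gridGraph.induce (gridCover N K)).Reachable ⟨(i, j), hpK⟩ corner := by
    rcases eq_or_ne i i' with rfl | hne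
    · exact .rfl
    · exact SimpleGraph.Adj.reachable (gridGraph_adj_horizontal hne
        (le_add_one_of_mem_gridInterval hp.1 hq.1) (le_add_one_of_mem_gridInterval hq.1 hp.1) j)
  have vertical : (gridGraph.induce (gridCover N K)).Reachable corner ⟨(i', j'), hqK⟩ := by
    rcases eq_or_ne j j' with rfl | hne
    · exact .rfl
    · exact SimpleGraph.Adj.reachable (gridGraph_adj_vertical hne
        (le_add_one_of_mem_gridInterval hp.2 hq.2) (le_add_one_of_mem_gridInterval hq.2 hp.2) i')
  exact horizontal.trans vertical

theorem preconnected_gridCover (N : ℝ) {K : Set (ℝ × ℝ)} (hK : IsPreconnected K) :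
    (gridGraph.induce (gridCover N K)).Preconnected := by
  rintro ⟨p, x, hxp, hx⟩ ⟨q, y, hyq, hy⟩
  refine hK.induction₂ (fun x y => ∀ p q : gridCover N K, x ∈ gridSquare N p → y ∈ gridSquare N q →
    (gridGraph.induce (gridCover N K)).Reachable p q) ?_ ?_ ?_ hx hy _ _ hxp hyq
  · intro x hx
    filter_upwards [mem_nhdsWithin_of_mem_nhds
      ((locallyFinite_gridSquare N).eventually_subset (isClosed_gridSquare N) x)]
      with y hy p q hp hq
    exact reachable_of_mem_gridSquare hx hp (hy hq)
  · intro x y z _ hy _ hxy hyz p q hp hq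
    obtain ⟨r, hr⟩ := exists_mem_gridSquare N y
    exact (hxy p ⟨r, y, hr, hy⟩ hp hr).trans (hyz ⟨r, y, hr, hy⟩ q hr hq)
  · exact fun x y _ _ hxy p q hp hq => (hxy q p hq hp).symm

theorem connected_gridCover (N : ℝ) {K : Set (ℝ × ℝ)} (hK : IsConnected K) :
    (gridGraph.induce (gridCover N K)).Connected :=
  have := (gridCover_nonempty N hK.nonempty).to_subtype
  { preconnected := preconnected_gridCover N hK.isPreconnected }

theorem eventually_gridSquare_subset {K U : Set (ℝ × ℝ)} (hK : IsCompact K) (hU : IsOpen U)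
    (hKU : K ⊆ U) : ∀ᶠ N in Filter.atTop, ∀ p ∈ gridCover N K, gridSquare N p ⊆ U := by
  obtain ⟨δ, hδ, hδU⟩ := hK.exists_thickening_subset_open hU hKU
  filter_upwards [Filter.eventually_gt_atTop 0, Filter.eventually_gt_atTop (1 / δ)]
    with N hN hNδ p ⟨x, hxp, hx⟩ y hy
  exact hδU (Metric.mem_thickening_iff.2
    ⟨x, hx, (dist_le_of_mem_gridSquare hN hy hxp).trans_lt (one_div_lt hδ hN |>.1 hNδ)⟩)

theorem eventually_gridCover_inter_subset {K K' U : Set (ℝ × ℝ)} (hK : IsCompact K)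
    (hK' : IsCompact K') (hU : IsOpen U) (hKU : K ∩ K' ⊆ U) :
    ∀ᶠ N in Filter.atTop, gridCover N K ∩ gridCover N K' ⊆ gridCover N U := by
  have hdiff : K \ U ⊆ K'ᶜ := fun x hx hx' => hx.2 (hKU ⟨hx.1, hx'⟩)
  filter_upwards [eventually_gridSquare_subset (hK.diff hU) hK'.isClosed.isOpen_compl hdiff]
  rintro N hN p ⟨⟨x, hxp, hx⟩, y, hyp, hy⟩
  by_contra hpU
  exact hN p ⟨x, hxp, hx, fun hxU => hpU ⟨x, hxp, hxU⟩⟩ hyp hy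

end Mesh

section CompactNeighborhood

variable {E : Type*} [TopologicalSpace E] [T2Space E] [LocallyCompactSpace E]
  [LocallyConnectedSpace E]

theorem exists_mem_nhds_isCompact_isConnected {U : Set E} {x : E} (hU : U ∈ nhds x) :
    ∃ L ∈ nhds x, L ⊆ U ∧ IsCompact L ∧ IsConnected L := by
  obtain ⟨K, hK, hKU, hKc⟩ := local_compact_nhds hU
  have hsub : closure (connectedComponentIn K x) ⊆ K :=
    closure_minimal (connectedComponentIn_subset K x) hKc.isClosed
  exact ⟨closure (connectedComponentIn K x),
    Filter.mem_of_superset (connectedComponentIn_mem_nhds hK) subset_closure, hsub.trans hKU,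
    hKc.of_isClosed_subset isClosed_closure hsub,
    (isConnected_connectedComponentIn_iff.2 (mem_of_mem_nhds hK)).closure⟩

theorem exists_isCompact_isConnected_mem_mem {U : Set E} (hU : IsOpen U) (hUc : IsPreconnected U)
    {x y : E} (hx : x ∈ U) (hy : y ∈ U) :
    ∃ L ⊆ U, IsCompact L ∧ IsConnected L ∧ x ∈ L ∧ y ∈ L := by
  refine hUc.induction₂ (fun x y => ∃ L ⊆ U, IsCompact L ∧ IsConnected L ∧ x ∈ L ∧ y ∈ L)
    (fun x hx => ?_) ?_ ?_ hx hy
  · obtain ⟨L, hL, hLU, hLc, hLconn⟩ := exists_mem_nhds_isCompact_isConnected (hU.mem_nhds hx)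
    filter_upwards [mem_nhdsWithin_of_mem_nhds hL] with y hy
    exact ⟨L, hLU, hLc, hLconn, mem_of_mem_nhds hL, hy⟩
  · rintro x y z - - - ⟨L, hLU, hLc, hLconn, hx, hy⟩ ⟨M, hMU, hMc, hMconn, hy', hz⟩
    exact ⟨L ∪ M, Set.union_subset hLU hMU, hLc.union hMc, hLconn.union ⟨y, hy, hy'⟩ hMconn,
      Or.inl hx, Or.inr hz⟩
  · rintro x y - - ⟨L, hLU, hLc, hLconn, hx, hy⟩
    exact ⟨L, hLU, hLc, hLconn, hy, hx⟩

theorem exists_isCompact_isConnected_subset_interior {U C : Set E} (hU : IsOpen U)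
    (hUc : IsConnected U) (hC : IsCompact C) (hCU : C ⊆ U) :
    ∃ L ⊆ U, IsCompact L ∧ IsConnected L ∧ C ⊆ interior L := by
  obtain ⟨q, hq⟩ := hUc.nonempty
  suffices ∃ L ⊆ U, IsCompact L ∧ IsConnected L ∧ q ∈ L ∧ C ⊆ interior L by
    obtain ⟨L, hLU, hLc, hLconn, -, hCL⟩ := this
    exact ⟨L, hLU, hLc, hLconn, hCL⟩
  refine hC.induction_on (p := fun C => ∃ L ⊆ U, IsCompact L ∧ IsConnected L ∧ q ∈ L ∧
    C ⊆ interior L) ?_ ?_ ?_ fun x hx => ?_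
  · exact ⟨{q}, by simpa using hq, isCompact_singleton, isConnected_singleton, rfl,
      Set.empty_subset _⟩
  · rintro C C' hCC ⟨L, hLU, hLc, hLconn, hqL, hCL⟩
    exact ⟨L, hLU, hLc, hLconn, hqL, hCC.trans hCL⟩
  · rintro C C' ⟨L, hLU, hLc, hLconn, hqL, hCL⟩ ⟨M, hMU, hMc, hMconn, hqM, hCM⟩
    exact ⟨L ∪ M, Set.union_subset hLU hMU, hLc.union hMc, hLconn.union ⟨q, hqL, hqM⟩ hMconn,
      Or.inl hqL, Set.union_subset (hCL.trans (interior_mono Set.subset_union_left))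
        (hCM.trans (interior_mono Set.subset_union_right))⟩
  · obtain ⟨M, hM, hMU, hMc, hMconn⟩ :=
      exists_mem_nhds_isCompact_isConnected (hU.mem_nhds (hCU hx))
    obtain ⟨L, hLU, hLc, hLconn, hqL, hxL⟩ :=
      exists_isCompact_isConnected_mem_mem hU hUc.isPreconnected hq (hCU hx)
    exact ⟨interior M, mem_nhdsWithin_of_mem_nhds (interior_mem_nhds.2 hM), L ∪ M,
      Set.union_subset hLU hMU, hLc.union hMc,
      hLconn.union ⟨x, hxL, mem_of_mem_nhds hM⟩ hMconn, Or.inl hqL,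
      interior_mono Set.subset_union_right⟩

end CompactNeighborhood

section Plane

variable {S T : Type*} [Finite S] [Finite T]

theorem IsCoreSystem.exists_compact {E : Type*} [TopologicalSpace E] [T2Space E]
    [LocallyCompactSpace E] [LocallyConnectedSpace E] {X : S → Set E} {Y : T → Set E}
    (hs : IsCoreSystem X Y) (hXo : ∀ σ, IsOpen (X σ)) (hXc : ∀ σ, IsConnected (X σ))
    (hYo : ∀ τ, IsOpen (Y τ)) (hYc : ∀ τ, IsConnected (Y τ)) :
    ∃ (L : S → Set E) (K : T → Set E), (∀ σ, L σ ⊆ X σ ∧ IsCompact (L σ) ∧ IsConnected (L σ)) ∧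
      (∀ τ, K τ ⊆ Y τ ∧ IsCompact (K τ) ∧ IsConnected (K τ)) ∧
      (∀ σ τ, (X σ ∩ Y τ).Nonempty → (L σ ∩ K τ).Nonempty) ∧
      Pairwise fun τ τ' => K τ ∩ K τ' ⊆ ⋃ σ, interior (L σ) := by
  have (x : {x : S × T // (X x.1 ∩ Y x.2).Nonempty}) : ∃ q, q ∈ X x.1.1 ∩ Y x.1.2 := x.2
  choose q hqX hqY using this
  have hK (τ : T) := exists_isCompact_isConnected_subset_interior (hYo τ) (hYc τ)
    (C := q '' {x | x.1.2 = τ}) (Set.toFinite _).isCompact (by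
      rintro _ ⟨x, rfl, rfl⟩
      exact hqY x)
  choose K hKY hKc hKconn hqK using hK
  have hL (σ : S) := exists_isCompact_isConnected_subset_interior (hXo σ) (hXc σ)
    (C := q '' {x | x.1.1 = σ} ∪
      ⋃ x ∈ {x : T × T | x.1 ≠ x.2}, (K x.1 ∩ K x.2) \ ⋃ σ' ∈ {σ' | σ' ≠ σ}, X σ')
    ((Set.toFinite _).isCompact.union ((Set.toFinite _).isCompact_biUnion fun x _ =>
      ((hKc x.1).inter (hKc x.2)).diff (isOpen_biUnion fun σ' _ => hXo σ'))) (by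
      refine Set.union_subset ?_ (Set.iUnion₂_subset fun x hx y hy => ?_)
      · rintro _ ⟨x, rfl, rfl⟩
        exact hqX x
      · obtain ⟨σ', hσ'⟩ := Set.mem_iUnion.1 (hs.inter_subset hx (hy.1.imp (hKY _ ·) (hKY _ ·)))
        by_cases hσ : σ' = σ
        · exact hσ ▸ hσ'
        · exact (hy.2 (Set.mem_biUnion hσ hσ')).elim)
  choose L hLX hLc hLconn hL using hL
  refine ⟨L, K, fun σ => ⟨hLX σ, hLc σ, hLconn σ⟩, fun τ => ⟨hKY τ, hKc τ, hKconn τ⟩,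
    fun σ τ hστ => ?_, fun τ τ' hτ y hy => ?_⟩
  · exact ⟨q ⟨(σ, τ), hστ⟩, interior_subset (hL σ (Or.inl ⟨_, rfl, rfl⟩)),
      interior_subset (hqK τ ⟨_, rfl, rfl⟩)⟩
  · obtain ⟨σ, hσ⟩ := Set.mem_iUnion.1 (hs.inter_subset hτ (hy.imp (hKY _ ·) (hKY _ ·)))
    refine Set.mem_iUnion.2 ⟨σ, hL σ (Or.inr (Set.mem_biUnion (x := (τ, τ')) hτ ⟨hy, ?_⟩))⟩
    simp only [Set.mem_iUnion, not_exists]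
    exact fun σ' hσ' hyσ' => Set.disjoint_left.1 (hs.disjoint hσ') hyσ' hσ

theorem IsCoreSystem.exists_grid {X : S → Set (ℝ × ℝ)} {Y : T → Set (ℝ × ℝ)}
    (hs : IsCoreSystem X Y) (hXo : ∀ σ, IsOpen (X σ)) (hXc : ∀ σ, IsConnected (X σ))
    (hYo : ∀ τ, IsOpen (Y τ)) (hYc : ∀ τ, IsConnected (Y τ)) :
    ∃ (D : S → Set (ℤ × ℤ)) (Z : T → Set (ℤ × ℤ)), IsCoreSystem D Z ∧
      (∀ σ, (D σ).Finite ∧ (gridGraph.induce (D σ)).Connected) ∧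
      (∀ τ, (Z τ).Finite ∧ (gridGraph.induce (Z τ)).Connected) ∧
      ∀ σ τ, (D σ ∩ Z τ).Nonempty ↔ (X σ ∩ Y τ).Nonempty := by
  obtain ⟨L, K, hL, hK, hLK, hKK⟩ := hs.exists_compact hXo hXc hYo hYc
  have hLX (σ : S) := eventually_gridSquare_subset (hL σ).2.1 (hXo σ) (hL σ).1
  have hKY (τ : T) := eventually_gridSquare_subset (hK τ).2.1 (hYo τ) (hK τ).1
  have hcover (τ τ' : T) (hτ : τ ≠ τ') := eventually_gridCover_inter_subset (hK τ).2.1 (hK τ').2.1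
    (isOpen_iUnion fun σ => isOpen_interior (s := L σ)) (hKK hτ)
  obtain ⟨N, hLX, hKY, hcover⟩ := ((Filter.eventually_all.2 hLX).and
    ((Filter.eventually_all.2 hKY).and (Filter.eventually_all.2 fun τ =>
      Filter.eventually_all.2 fun τ' => Filter.eventually_all.2 (hcover τ τ')))).exists
  refine ⟨fun σ => gridCover N (L σ), fun τ => gridCover N (K τ), ⟨?_, ?_⟩,
    fun σ => ⟨gridCover_finite N (hL σ).2.1, connected_gridCover N (hL σ).2.2⟩,
    fun τ => ⟨gridCover_finite N (hK τ).2.1, connected_gridCover N (hK τ).2.2⟩,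
    fun σ τ => ⟨?_, fun h => ?_⟩⟩
  · intro σ σ' hσ
    refine Set.disjoint_left.2 fun p hp hp' => ?_
    have ⟨x, hxp, _⟩ := hp
    exact Set.disjoint_left.1 (hs.disjoint hσ) (hLX σ p hp hxp) (hLX σ' p hp' hxp)
  · intro τ τ' hτ p hp
    obtain ⟨x, hxp, hx⟩ := hcover τ τ' hτ hp
    obtain ⟨σ, hσ⟩ := Set.mem_iUnion.1 hx
    exact Set.mem_iUnion.2 ⟨σ, x, hxp, interior_subset hσ⟩
  · rintro ⟨p, ⟨x, hxp, hx⟩, hpK⟩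
    exact ⟨x, hLX σ p ⟨x, hxp, hx⟩ hxp, hKY τ p hpK hxp⟩
  · obtain ⟨x, hxL, hxK⟩ := hLK σ τ h
    obtain ⟨p, hp⟩ := exists_mem_gridSquare N x
    exact ⟨p, ⟨x, hp, hxL⟩, x, hp, hxK⟩

theorem IsCoreSystem.exists_gridModel {E : Type*} [TopologicalSpace E] (e : E ≃ₜ ℝ × ℝ)
    {X : S → Set E} {Y : T → Set E} (hs : IsCoreSystem X Y) (hXo : ∀ σ, IsOpen (X σ))
    (hXc : ∀ σ, IsConnected (X σ)) (hYo : ∀ τ, IsOpen (Y τ)) (hYc : ∀ τ, IsConnected (Y τ)) :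
    ∃ (G : SimpleGraph S) (B : S → Set (ℤ × ℤ)), IsGridModel G B ∧
      ∀ τ, (G.induce {σ | (X σ ∩ Y τ).Nonempty}).Preconnected := by
  obtain ⟨D, Z, hDZ, hD, hZ, hinc⟩ := (hs.preimage e.symm).exists_grid
    (fun σ => (hXo σ).preimage e.symm.continuous)
    (fun σ => e.symm.isConnected_preimage.2 (hXc σ))
    (fun τ => (hYo τ).preimage e.symm.continuous)
    (fun τ => e.symm.isConnected_preimage.2 (hYc τ))
  obtain ⟨B, hB, hconn⟩ := hDZ.exists_preconnected_contactGraph (fun σ => (hD σ).1)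
    (fun τ => (hZ τ).1) (fun σ => (hD σ).2) (fun τ => (hZ τ).2.preconnected)
  refine ⟨contactGraph gridGraph B, B, ⟨fun σ => hB.finite (fun τ => (hZ τ).1) (hD σ).1,
    hB.connected, hB.disjoint, le_rfl⟩, fun τ => ?_⟩
  have : {σ | (D σ ∩ Z τ).Nonempty} = {σ | (X σ ∩ Y τ).Nonempty} := Set.ext fun σ =>
    (hinc σ τ).trans (e.symm.surjective.nonempty_preimage (s := X σ ∩ Y τ))
  exact this ▸ hconn τ

end Plane

section Forest

variable {V : Type*} [Finite V] {G : SimpleGraph V} {s : Set V}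

theorem exists_cliqueFree_three_of_preconnected_induce (hG : (G.induce s).Preconnected) :
    ∃ F ≤ G, F.CliqueFree 3 ∧ F.support ⊆ s ∧ s.ncard ≤ F.edgeSet.ncard + 1 := by
  rcases s.eq_empty_or_nonempty with rfl | hs
  · exact ⟨⊥, bot_le, SimpleGraph.isAcyclic_bot.cliqueFree le_rfl, by simp, by simp⟩
  have := hs.to_subtype
  obtain ⟨F, hF, hFtree⟩ := (SimpleGraph.Connected.mk hG).exists_isTree_le
  refine ⟨F.map (Function.Embedding.subtype (· ∈ s)),
    SimpleGraph.map_le_iff_le_comap _ _ _ |>.2 hF,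
    SimpleGraph.cliqueFree_map_iff.2 (hFtree.isAcyclic.cliqueFree le_rfl), ?_, ?_⟩
  · rintro _ ⟨_, -, x, _, -, rfl, -⟩
    exact x.2
  · classical
    have := Fintype.ofFinite V
    rw [SimpleGraph.edgeSet_map, Set.ncard_image_of_injective _ (Function.Embedding.injective _),
      ← SimpleGraph.coe_edgeFinset, Set.ncard_coe_finset, hFtree.card_edgeFinset,
      ← Nat.card_coe_set_eq, Nat.card_eq_fintype_card]

theorem ncard_edgeSet_iSup {α : Type*} [Fintype α] {F : α → SimpleGraph V}
    (hF : Pairwise (Function.onFun Disjoint fun a => (F a).edgeSet)) :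
    (⨆ a, F a).edgeSet.ncard = ∑ a, (F a).edgeSet.ncard := by
  rw [SimpleGraph.edgeSet_iSup, Set.ncard_iUnion_of_finite (fun _ => Set.toFinite _) hF,
    finsum_eq_sum_of_fintype]

end Forest

section SetFamily

open scoped FinsetFamily

variable {ι : Type*} [DecidableEq ι] {k : ℕ}

theorem union_eq_union_of_subset_union {x y w : Finset ι} (hx : #x = k + 1) (hy : #y = k + 1)
    (hw : #w = k + 1) (hxy : #(x ∩ y) = k) (hxw : #(x ∩ w) = k) (h : w ⊆ x ∪ y) :
    x ∪ y = x ∪ w := by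
  have := card_union_add_card_inter x y
  have := card_union_add_card_inter x w
  exact (eq_of_subset_of_card_le (union_subset subset_union_left h) (by omega)).symm

theorem inter_eq_inter_of_not_subset_union {x y w : Finset ι} (hw : #w = k + 1)
    (hxw : #(x ∩ w) = k) (hyw : #(y ∩ w) = k) (h : ¬ w ⊆ x ∪ y) : x ∩ w = y ∩ w := by
  have hcard : #((x ∪ y) ∩ w) ≤ k := by
    have := card_lt_card (ssubset_of_subset_not_subset (inter_subset_right (s₁ := x ∪ y) (s₂ := w))
      fun h' => h (h'.trans inter_subset_left))
    omega
  have hx : x ∩ w = (x ∪ y) ∩ w :=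
    eq_of_subset_of_card_le (inter_subset_inter_right subset_union_left) (hxw ▸ hcard)
  have hy : y ∩ w = (x ∪ y) ∩ w :=
    eq_of_subset_of_card_le (inter_subset_inter_right subset_union_right) (hyw ▸ hcard)
  exact hx.trans hy.symm

theorem union_eq_union_or_inter_eq_inter {x y w : Finset ι} (hx : #x = k + 1) (hy : #y = k + 1)
    (hw : #w = k + 1) (hxy : #(x ∩ y) = k) (hxw : #(x ∩ w) = k) (hyw : #(y ∩ w) = k) :
    x ∪ y = x ∪ w ∧ x ∪ y = y ∪ w ∨ x ∩ y = x ∩ w ∧ x ∩ w = y ∩ w := by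
  by_cases h : w ⊆ x ∪ y
  · refine Or.inl ⟨union_eq_union_of_subset_union hx hy hw hxy hxw h, ?_⟩
    rw [union_comm x y] at h ⊢
    exact union_eq_union_of_subset_union hy hx hw (inter_comm x y ▸ hxy) hyw h
  · have hinter := inter_eq_inter_of_not_subset_union hw hxw hyw h
    have hsub : x ∩ w ⊆ x ∩ y :=
      subset_inter inter_subset_left (hinter.trans_subset inter_subset_left)
    exact Or.inr ⟨(eq_of_subset_of_card_le hsub (by omega)).symm, hinter⟩

section GridModel

variable {S : Finset (Finset ι)} {B : S → Set (ℤ × ℤ)}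

theorem card_filter_subset_le_add_two (hS : (S : Set (Finset ι)).Sized (k + 1)) {U : Finset ι}
    (hU : #U = k + 2) : #{σ : S | σ.1 ⊆ U} ≤ k + 2 := by
  calc #{σ : S | σ.1 ⊆ U} = #(map (Function.Embedding.subtype (· ∈ S)) {σ : S | σ.1 ⊆ U}) :=
        (card_map _).symm
    _ ≤ #(U.powersetCard (k + 1)) := card_le_card fun σ hσ => by
        obtain ⟨σ, hσU, rfl⟩ := mem_map.1 hσ
        exact mem_powersetCard.2 ⟨(mem_filter.1 hσU).2, hS σ.2⟩
    _ = k + 2 := by rw [card_powersetCard, hU, Nat.choose_succ_self_right]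

/-- The union of the two ends of an edge. -/
def edgeUnion (e : Sym2 S) : Finset ι := (e.map Subtype.val).sup

theorem subset_edgeUnion {x : S} {e : Sym2 S} (hx : x ∈ e) : x.1 ⊆ edgeUnion e := by
  obtain ⟨y, rfl⟩ := hx
  exact subset_union_left

variable {H : SimpleGraph S} [DecidableRel H.Adj]

theorem card_filter_edgeUnion_le (hk : 1 ≤ k) (hS : (S : Set (Finset ι)).Sized (k + 1))
    (hB : IsGridModel H B) (hadj : ∀ x y, H.Adj x y → #(x.1 ∩ y.1) = k) (U : Finset ι) :
    #{e : H.edgeSet | edgeUnion e.1 = U} ≤ 3 * k := by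
  by_cases hU : #U = k + 2
  · let s : Set S := {σ | σ.1 ⊆ U}
    have hs : Fintype.card s ≤ k + 2 := by
      rw [Fintype.card_subtype]
      exact card_filter_subset_le_add_two hS hU
    have hsub : map (Function.Embedding.subtype (· ∈ H.edgeSet))
        {e : H.edgeSet | edgeUnion e.1 = U} ⊆
          (H.induce s).edgeFinset.map (Function.Embedding.subtype _).sym2Map := by
      intro e he
      obtain ⟨⟨e, heH⟩, heU, rfl⟩ := mem_map.1 he
      rw [SimpleGraph.map_edgeFinset_induce, mem_inter, SimpleGraph.mem_edgeFinset, mem_sym2_iff]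
      refine ⟨heH, fun x hx => Set.mem_toFinset.2 ?_⟩
      exact (subset_edgeUnion hx).trans (mem_filter.1 heU).2.subset
    have hcard := card_le_card hsub
    rw [card_map, card_map] at hcard
    have := (hB.comap (SimpleGraph.Embedding.induce s).toHom
      Subtype.val_injective).hasAlgebraicDual.card_edgeFinset_add_six_le hs
      (by omega)
    omega
  · rw [card_eq_zero.2 (filter_eq_empty_iff.2 fun e _ heU => hU ?_)]
    · exact Nat.zero_le _
    · obtain ⟨⟨x, y⟩, hxy⟩ := e
      have := card_union_add_card_inter x.1 y.1
      have := hS x.2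
      have := hS y.2
      have := hadj x y hxy
      have : x.1 ∪ y.1 = U := heU
      rw [← this]
      omega

theorem card_edgeFinset_le_of_isGridModel [Finite ι] (hk : 1 ≤ k)
    (hS : (S : Set (Finset ι)).Sized (k + 1)) (hB : IsGridModel H B)
    (hadj : ∀ x y, H.Adj x y → #(x.1 ∩ y.1) = k)
    (htri : ∀ x y w, H.Adj x y → H.Adj x w → H.Adj y w →
      ¬ (x.1 ∩ y.1 = x.1 ∩ w.1 ∧ x.1 ∩ w.1 = y.1 ∩ w.1)) :
    (4 * k + 1) * #H.edgeFinset ≤ 12 * k * #S := by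
  rw [← Fintype.card_coe S]
  refine hB.hasAlgebraicDual.card_edgeFinset_le_of_label (lab := edgeUnion) ?_ hk
    (card_filter_edgeUnion_le hk hS hB hadj)
  intro x y w hxy hxw hyw
  exact (union_eq_union_or_inter_eq_inter (hS x.2) (hS y.2) (hS w.2) (hadj _ _ hxy) (hadj _ _ hxw)
    (hadj _ _ hyw)).resolve_right (htri x y w hxy hxw hyw)

end GridModel

theorem eq_inter_of_subset_of_subset {σ σ' τ : Finset ι} (hσ : #σ = k + 1) (hσ' : #σ' = k + 1)
    (hτ : #τ = k) (hne : σ ≠ σ') (h : τ ⊆ σ) (h' : τ ⊆ σ') : τ = σ ∩ σ' := by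
  refine eq_of_subset_of_card_le (subset_inter h h') ?_
  by_contra! hlt
  exact hne (eq_of_subset_of_card_le (inter_eq_left.1 (eq_of_subset_of_card_le inter_subset_left
    (by omega))) (by omega))

theorem ncard_setOf_subset_coe (S : Finset (Finset ι)) (τ : Finset ι) :
    {σ : S | τ ⊆ σ.1}.ncard = #{σ ∈ S | τ ⊆ σ} := by
  rw [← Set.ncard_coe_finset, ← Set.ncard_image_of_injective _ Subtype.val_injective]
  congr 1
  ext σ
  simp [and_comm]

theorem sum_card_supersets_sub_one_le [Finite ι] (hk : 1 ≤ k) {S T : Finset (Finset ι)}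
    (hS : (S : Set (Finset ι)).Sized (k + 1)) (hT : (T : Set (Finset ι)).Sized k)
    {G : SimpleGraph S} {B : S → Set (ℤ × ℤ)} (hB : IsGridModel G B)
    (hconn : ∀ τ : T, (G.induce {σ | τ.1 ⊆ σ.1}).Preconnected) :
    (4 * k + 1) * ∑ τ ∈ T, (#{σ ∈ S | τ ⊆ σ} - 1) ≤ 12 * k * #S := by
  classical
  choose F hFG hFfree hFsupp hFcard using fun τ =>
    exists_cliqueFree_three_of_preconnected_induce (hconn τ)
  have hinter (τ : T) {x y : S} (h : (F τ).Adj x y) : τ.1 = x.1 ∩ y.1 :=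
    eq_inter_of_subset_of_subset (hS x.2) (hS y.2) (hT τ.2) (Subtype.coe_injective.ne h.ne)
      (hFsupp τ ⟨y, h⟩) (hFsupp τ ⟨x, h.symm⟩)
  have hcard : ∑ τ ∈ T, (#{σ ∈ S | τ ⊆ σ} - 1) ≤ #(⨆ τ, F τ).edgeFinset := by
    have hdisj : Pairwise (Function.onFun Disjoint fun τ => (F τ).edgeSet) := by
      refine fun τ τ' hne => Set.disjoint_left.2 ?_
      rintro ⟨x, y⟩ hxy hxy'
      exact hne (Subtype.ext ((hinter τ hxy).trans (hinter τ' hxy').symm))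
    calc ∑ τ ∈ T, (#{σ ∈ S | τ ⊆ σ} - 1) = ∑ τ : T, (#{σ ∈ S | τ.1 ⊆ σ} - 1) :=
          (sum_coe_sort T fun τ => #{σ ∈ S | τ ⊆ σ} - 1).symm
      _ ≤ ∑ τ, (F τ).edgeSet.ncard := sum_le_sum fun τ _ => by
          rw [Nat.sub_le_iff_le_add, ← ncard_setOf_subset_coe]
          exact hFcard τ
      _ = #(⨆ τ, F τ).edgeFinset := by
          rw [← ncard_edgeSet_iSup hdisj, ← SimpleGraph.coe_edgeFinset, Set.ncard_coe_finset]
  refine (Nat.mul_le_mul_left _ hcard).trans (card_edgeFinset_le_of_isGridModel hk hS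
    (hB.comap (SimpleGraph.Hom.ofLE (iSup_le hFG)) Function.injective_id) ?_ ?_)
  · intro x y hxy
    obtain ⟨τ, hτ⟩ := SimpleGraph.iSup_adj.1 hxy
    exact hinter τ hτ ▸ hT τ.2
  · rintro x y w hxy hxw hyw ⟨hyw', hxy'⟩
    obtain ⟨τ, hτ⟩ := SimpleGraph.iSup_adj.1 hxy
    obtain ⟨τ', hτ'⟩ := SimpleGraph.iSup_adj.1 hxw
    obtain ⟨τ'', hτ''⟩ := SimpleGraph.iSup_adj.1 hyw
    obtain rfl : τ = τ' := Subtype.ext (by rw [hinter τ hτ, hinter τ' hτ', hyw'])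
    obtain rfl : τ = τ'' := Subtype.ext (by rw [hinter τ hτ', hinter τ'' hτ'', hxy'])
    exact hFfree τ {x, y, w} (SimpleGraph.is3Clique_triple_iff.2 ⟨hτ, hτ', hτ''⟩)

theorem mul_card_eq_sum_shadow {𝒜 : Finset (Finset ι)} (h𝒜 : (𝒜 : Set (Finset ι)).Sized (k + 1)) :
    (k + 1) * #𝒜 = ∑ τ ∈ ∂ 𝒜, #{σ ∈ 𝒜 | τ ⊆ σ} := by
  have hpowerset (σ : Finset ι) (hσ : σ ∈ 𝒜) : {τ ∈ ∂ 𝒜 | τ ⊆ σ} = σ.powersetCard k := by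
    ext τ
    rw [mem_filter, mem_powersetCard, and_comm]
    refine and_congr_right fun hτσ => ⟨fun hτ => h𝒜.shadow hτ, fun hτ => ?_⟩
    exact mem_shadow_iff_exists_mem_card_add_one.2 ⟨σ, hσ, hτσ, by rw [h𝒜 hσ, hτ]⟩
  calc (k + 1) * #𝒜 = ∑ σ ∈ 𝒜, #{τ ∈ ∂ 𝒜 | τ ⊆ σ} := by
        rw [mul_comm, ← smul_eq_mul, ← sum_const]
        refine sum_congr rfl fun σ hσ => ?_
        rw [hpowerset σ hσ, card_powersetCard, h𝒜 hσ, Nat.choose_succ_self_right]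
    _ = ∑ τ ∈ ∂ 𝒜, #{σ ∈ 𝒜 | τ ⊆ σ} :=
        (sum_card_bipartiteAbove_eq_sum_card_bipartiteBelow fun τ σ : Finset ι => τ ⊆ σ).symm

theorem mul_card_le_card_shadow_add {𝒜 T : Finset (Finset ι)}
    (h𝒜 : (𝒜 : Set (Finset ι)).Sized (k + 1))
    (hT : ∀ τ ∈ ∂ 𝒜, τ ∉ T → #{σ ∈ 𝒜 | τ ⊆ σ} ≤ 1) :
    (k + 1) * #𝒜 ≤ #(∂ 𝒜) + ∑ τ ∈ T, (#{σ ∈ 𝒜 | τ ⊆ σ} - 1) := by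
  calc (k + 1) * #𝒜 = ∑ τ ∈ ∂ 𝒜, #{σ ∈ 𝒜 | τ ⊆ σ} := mul_card_eq_sum_shadow h𝒜
    _ ≤ ∑ τ ∈ ∂ 𝒜, (1 + (#{σ ∈ 𝒜 | τ ⊆ σ} - 1)) := sum_le_sum fun τ _ => by omega
    _ = #(∂ 𝒜) + ∑ τ ∈ ∂ 𝒜, (#{σ ∈ 𝒜 | τ ⊆ σ} - 1) := by simp [sum_add_distrib]
    _ ≤ #(∂ 𝒜) + ∑ τ ∈ T, (#{σ ∈ 𝒜 | τ ⊆ σ} - 1) := by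
        refine Nat.add_le_add_left (sum_le_sum_of_ne_zero fun τ hτ hne => ?_) _
        by_contra hτT
        exact hne (Nat.sub_eq_zero_of_le (hT τ hτ hτT))

theorem sum_card_supersets_le_card {𝒞 T : Finset (Finset ι)}
    (h : ∀ σ ∈ 𝒞, #{τ ∈ T | τ ⊆ σ} ≤ 1) : ∑ τ ∈ T, #{σ ∈ 𝒞 | τ ⊆ σ} ≤ #𝒞 := by
  calc ∑ τ ∈ T, #{σ ∈ 𝒞 | τ ⊆ σ} = ∑ σ ∈ 𝒞, #{τ ∈ T | τ ⊆ σ} :=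
        sum_card_bipartiteAbove_eq_sum_card_bipartiteBelow fun τ σ : Finset ι => τ ⊆ σ
    _ ≤ #𝒞 := by simpa using sum_le_card_nsmul 𝒞 _ 1 h

theorem mul_card_le_of_sum_card_supersets {𝒜 S T : Finset (Finset ι)} (hk : 1 ≤ k)
    (h𝒜 : (𝒜 : Set (Finset ι)).Sized (k + 1)) (hS : S ⊆ 𝒜)
    (hT : ∀ τ ∈ ∂ 𝒜, τ ∉ T → #{σ ∈ 𝒜 | τ ⊆ σ} ≤ 1)
    (h𝒜S : ∀ σ ∈ 𝒜 \ S, #{τ ∈ T | τ ⊆ σ} ≤ 1)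
    (hsum : (4 * k + 1) * ∑ τ ∈ T, (#{σ ∈ S | τ ⊆ σ} - 1) ≤ 12 * k * #S) :
    (4 * k + 1) * ((k + 1) * #𝒜) ≤ (4 * k + 1) * #(∂ 𝒜) + 12 * k * #𝒜 := by
  have hsplit (τ : Finset ι) : #{σ ∈ 𝒜 | τ ⊆ σ} = #{σ ∈ 𝒜 \ S | τ ⊆ σ} + #{σ ∈ S | τ ⊆ σ} := by
    rw [← card_union_of_disjoint (disjoint_filter_filter sdiff_disjoint), ← filter_union,
      sdiff_union_of_subset hS]
  have hbound : (k + 1) * #𝒜 ≤ #(∂ 𝒜) + (#(𝒜 \ S) + ∑ τ ∈ T, (#{σ ∈ S | τ ⊆ σ} - 1)) := by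
    refine (mul_card_le_card_shadow_add h𝒜 hT).trans (Nat.add_le_add_left ?_ _)
    calc ∑ τ ∈ T, (#{σ ∈ 𝒜 | τ ⊆ σ} - 1)
        ≤ ∑ τ ∈ T, (#{σ ∈ 𝒜 \ S | τ ⊆ σ} + (#{σ ∈ S | τ ⊆ σ} - 1)) :=
          sum_le_sum fun τ _ => by rw [hsplit]; omega
      _ ≤ _ := by
          rw [sum_add_distrib]
          exact Nat.add_le_add_right (sum_card_supersets_le_card h𝒜S) _
  have hcard : #(𝒜 \ S) + #S = #𝒜 := card_sdiff_add_card_eq_card hS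
  nlinarith [Nat.mul_le_mul_left (4 * k + 1) hbound,
    Nat.mul_le_mul_right #(𝒜 \ S) (show 4 * k + 1 ≤ 12 * k by omega)]

end SetFamily

section Faces

open scoped FinsetFamily

variable {ι E : Type*}

/-- The intersection `A_σ = ⋂_{i ∈ σ} A_i` of a family of sets. -/
def interOn (A : ι → Set E) (σ : Finset ι) : Set E := ⋂ i ∈ σ, A i

theorem interOn_anti (A : ι → Set E) : Antitone (interOn A) := fun _ _ h =>
  Set.biInter_subset_biInter_left h

theorem interOn_union [DecidableEq ι] (A : ι → Set E) (σ τ : Finset ι) :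
    interOn A (σ ∪ τ) = interOn A σ ∩ interOn A τ :=
  iInf_union

/-- The families considered in the theorem: no `k + 2` members meet, and the intersections of `k`
or `k + 1` members are open and connected unless they have at most one point. -/
structure IsPointOrOpenFamily [TopologicalSpace E] (A : ι → Set E) (k : ℕ) : Prop where
  card_le : ∀ σ, (interOn A σ).Nonempty → #σ ≤ k + 1
  subsingleton_or_isOpen : ∀ σ, #σ = k ∨ #σ = k + 1 →
    (interOn A σ).Subsingleton ∨ IsOpen (interOn A σ) ∧ IsPreconnected (interOn A σ)

namespace IsPointOrOpenFamily

variable [TopologicalSpace E] {A : ι → Set E} {k : ℕ} {σ σ' τ : Finset ι}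

theorem isConnected (hA : IsPointOrOpenFamily A k) (hσ : #σ = k ∨ #σ = k + 1)
    (hne : (interOn A σ).Nonempty) : IsConnected (interOn A σ) :=
  ⟨hne, (hA.subsingleton_or_isOpen σ hσ).elim Set.Subsingleton.isPreconnected And.right⟩

theorem subset_of_inter_nonempty (hA : IsPointOrOpenFamily A k) (hσ : #σ = k + 1)
    (h : (interOn A σ ∩ interOn A τ).Nonempty) : τ ⊆ σ := by
  classical
  rw [← interOn_union] at h
  exact union_eq_left.1 (eq_of_subset_of_card_le subset_union_left (hσ ▸ hA.card_le _ h)).symm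

theorem eq_of_mem_interOn (hA : IsPointOrOpenFamily A k) (hσ : #σ = k + 1) (hσ' : #σ' = k + 1)
    {x : E} (hx : x ∈ interOn A σ) (hx' : x ∈ interOn A σ') : σ = σ' :=
  (hA.subset_of_inter_nonempty hσ' ⟨x, hx', hx⟩).antisymm
    (hA.subset_of_inter_nonempty hσ ⟨x, hx, hx'⟩)

end IsPointOrOpenFamily

variable [Fintype ι]

open Classical in
/-- The faces with `m` vertices of the nerve of `A`: these are the faces of dimension `m - 1`, so
that `f_k` counts `nerveFaces A (k + 1)`. -/
noncomputable def nerveFaces (A : ι → Set E) (m : ℕ) : Finset (Finset ι) :=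
  {σ | #σ = m ∧ (interOn A σ).Nonempty}

theorem mem_nerveFaces {A : ι → Set E} {m : ℕ} {σ : Finset ι} :
    σ ∈ nerveFaces A m ↔ #σ = m ∧ (interOn A σ).Nonempty := by
  simp [nerveFaces]

theorem sized_nerveFaces (A : ι → Set E) (m : ℕ) : (nerveFaces A m : Set (Finset ι)).Sized m :=
  fun _ hσ => (mem_nerveFaces.1 hσ).1

theorem mem_shadow_nerveFaces [DecidableEq ι] {A : ι → Set E} {m : ℕ} {τ : Finset ι} :
    τ ∈ ∂ (nerveFaces A (m + 1)) ↔ #τ = m ∧ (interOn A τ).Nonempty ∧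
      ∃ σ, τ ⊂ σ ∧ #σ = m + 1 ∧ (interOn A σ).Nonempty := by
  simp only [mem_shadow_iff_exists_mem_card_add_one, mem_nerveFaces]
  constructor
  · rintro ⟨σ, ⟨hσ, hne⟩, hτσ, hcard⟩
    exact ⟨by omega, hne.mono (interOn_anti A hτσ), σ,
      ssubset_of_subset_of_ne hτσ (by rintro rfl; omega), hσ, hne⟩
  · rintro ⟨hτ, -, σ, hτσ, hσ, hne⟩
    exact ⟨σ, ⟨hσ, hne⟩, hτσ.subset, by omega⟩

open Classical in
/-- The faces of the nerve with `m` vertices whose intersection is open. -/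
noncomputable def openFaces [TopologicalSpace E] (A : ι → Set E) (m : ℕ) : Finset (Finset ι) :=
  {σ ∈ nerveFaces A m | IsOpen (interOn A σ)}

theorem mem_openFaces [TopologicalSpace E] {A : ι → Set E} {m : ℕ} {σ : Finset ι} :
    σ ∈ openFaces A m ↔ σ ∈ nerveFaces A m ∧ IsOpen (interOn A σ) := by
  simp [openFaces]

namespace IsPointOrOpenFamily

variable [TopologicalSpace E] {A : ι → Set E} {k : ℕ} {σ σ' τ τ' : Finset ι}

theorem inter_nonempty_iff_subset (hA : IsPointOrOpenFamily A k) (hσ : σ ∈ nerveFaces A (k + 1)) :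
    (interOn A σ ∩ interOn A τ).Nonempty ↔ τ ⊆ σ := by
  obtain ⟨hcard, hne⟩ := mem_nerveFaces.1 hσ
  refine ⟨hA.subset_of_inter_nonempty hcard, fun h => ?_⟩
  rwa [Set.inter_eq_left.2 (interOn_anti A h)]

theorem union_mem_openFaces [DecidableEq ι] (hA : IsPointOrOpenFamily A k)
    (hτ : τ ∈ openFaces A k) (hτ' : τ' ∈ openFaces A k) (hne : τ ≠ τ')
    (h : (interOn A τ ∩ interOn A τ').Nonempty) : τ ∪ τ' ∈ openFaces A (k + 1) := by
  simp only [mem_openFaces, mem_nerveFaces, interOn_union] at hτ hτ' ⊢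
  refine ⟨⟨le_antisymm (hA.card_le _ (by rwa [interOn_union])) ?_, h⟩, hτ.2.inter hτ'.2⟩
  by_contra! hlt
  exact hne ((eq_of_subset_of_card_le subset_union_left (by omega)).trans
    (eq_of_subset_of_card_le subset_union_right (by omega)).symm)

theorem card_supersets_le_one [DecidableEq ι] (hA : IsPointOrOpenFamily A k)
    (hτ : τ ∈ nerveFaces A k) (hτo : τ ∉ openFaces A k) :
    #{σ ∈ nerveFaces A (k + 1) | τ ⊆ σ} ≤ 1 := by
  have hsub : (interOn A τ).Subsingleton :=
    (hA.subsingleton_or_isOpen τ (Or.inl (mem_nerveFaces.1 hτ).1)).resolve_right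
      fun h => hτo (mem_openFaces.2 ⟨hτ, h.1⟩)
  refine card_le_one.2 fun σ hσ σ' hσ' => ?_
  simp only [mem_filter, mem_nerveFaces] at hσ hσ'
  obtain ⟨⟨hσ, x, hx⟩, hτσ⟩ := hσ
  obtain ⟨⟨hσ', x', hx'⟩, hτσ'⟩ := hσ'
  obtain rfl := hsub (interOn_anti A hτσ hx) (interOn_anti A hτσ' hx')
  exact hA.eq_of_mem_interOn hσ hσ' hx hx'

theorem card_subsets_le_one [DecidableEq ι] (hA : IsPointOrOpenFamily A k)
    (hσ : σ ∈ nerveFaces A (k + 1)) (hσo : σ ∉ openFaces A (k + 1)) :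
    #{τ ∈ openFaces A k | τ ⊆ σ} ≤ 1 := by
  refine card_le_one.2 fun τ hτ τ' hτ' => ?_
  by_contra hne
  obtain ⟨hτ, hτσ⟩ := mem_filter.1 hτ
  obtain ⟨hτ', hτσ'⟩ := mem_filter.1 hτ'
  obtain ⟨hcard, hσne⟩ := mem_nerveFaces.1 hσ
  have hunion := hA.union_mem_openFaces hτ hτ' hne
    (hσne.mono (Set.subset_inter (interOn_anti A hτσ) (interOn_anti A hτσ')))
  have hunioncard := (mem_nerveFaces.1 (mem_openFaces.1 hunion).1).1
  exact hσo (eq_of_subset_of_card_le (union_subset hτσ hτσ') (by omega) ▸ hunion)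

theorem isCoreSystem (hA : IsPointOrOpenFamily A k) :
    IsCoreSystem (fun σ : openFaces A (k + 1) => interOn A σ.1)
      (fun τ : openFaces A k => interOn A τ.1) where
  disjoint σ σ' hne := Set.disjoint_left.2 fun x hx hx' => hne <| Subtype.ext <|
    hA.eq_of_mem_interOn (sized_nerveFaces A _ (mem_openFaces.1 σ.2).1)
      (sized_nerveFaces A _ (mem_openFaces.1 σ'.2).1) hx hx'
  inter_subset τ τ' hne x hx := by
    classical
    exact Set.mem_iUnion.2 ⟨⟨τ.1 ∪ τ'.1, hA.union_mem_openFaces τ.2 τ'.2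
      (Subtype.coe_injective.ne hne) ⟨x, hx⟩⟩, by rwa [interOn_union]⟩

theorem sum_card_openFaces_le [DecidableEq ι] (hA : IsPointOrOpenFamily A k) (hk : 1 ≤ k)
    (e : E ≃ₜ ℝ × ℝ) :
    (4 * k + 1) * ∑ τ ∈ openFaces A k, (#{σ ∈ openFaces A (k + 1) | τ ⊆ σ} - 1) ≤
      12 * k * #(openFaces A (k + 1)) := by
  have hopen {m : ℕ} (σ : openFaces A m) := mem_openFaces.1 σ.2
  have hface {m : ℕ} (σ : openFaces A m) := mem_nerveFaces.1 (hopen σ).1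
  obtain ⟨G, B, hB, hconn⟩ := hA.isCoreSystem.exists_gridModel e (fun σ => (hopen σ).2)
    (fun σ => hA.isConnected (Or.inr (hface σ).1) (hface σ).2) (fun τ => (hopen τ).2)
    (fun τ => hA.isConnected (Or.inl (hface τ).1) (hface τ).2)
  refine sum_card_supersets_sub_one_le hk (fun σ hσ => (hface ⟨σ, hσ⟩).1)
    (fun τ hτ => (hface ⟨τ, hτ⟩).1) hB fun τ => ?_
  have hset : {σ : openFaces A (k + 1) | (interOn A σ.1 ∩ interOn A τ.1).Nonempty} =
      {σ | τ.1 ⊆ σ.1} := Set.ext fun σ => hA.inter_nonempty_iff_subset (hopen σ).1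
  exact hset ▸ hconn τ

theorem mul_card_nerveFaces_le [DecidableEq ι] (hA : IsPointOrOpenFamily A k) (hk : 1 ≤ k)
    (e : E ≃ₜ ℝ × ℝ) :
    (4 * k + 1) * ((k + 1) * #(nerveFaces A (k + 1))) ≤
      (4 * k + 1) * #(∂ (nerveFaces A (k + 1))) + 12 * k * #(nerveFaces A (k + 1)) := by
  refine mul_card_le_of_sum_card_supersets hk (sized_nerveFaces A _)
    (fun σ hσ => (mem_openFaces.1 hσ).1) (fun τ hτ hτo => ?_) (fun σ hσ => ?_)
    (hA.sum_card_openFaces_le hk e)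
  · obtain ⟨hcard, hne, -⟩ := mem_shadow_nerveFaces.1 hτ
    exact hA.card_supersets_le_one (mem_nerveFaces.2 ⟨hcard, hne⟩) hτo
  · exact hA.card_subsets_le_one (mem_sdiff.1 hσ).1 (mem_sdiff.1 hσ).2

end IsPointOrOpenFamily

end Faces

section FaceNumbers

open scoped FinsetFamily

variable {n : ℕ} {E : Type*}

theorem fNum_eq_card_nerveFaces (A : Fin n → Set E) (k : ℕ) :
    fNum A k = #(nerveFaces A (k + 1)) :=
  Nat.subtype_card _ fun _ => mem_nerveFaces

theorem fInd_sub_one_eq_card_shadow (A : Fin n → Set E) {k : ℕ} (hk : 1 ≤ k) :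
    fInd A (k - 1) = #(∂ (nerveFaces A (k + 1))) := by
  obtain ⟨k, rfl⟩ := Nat.exists_eq_add_of_le' hk
  exact Nat.subtype_card _ fun _ => mem_shadow_nerveFaces

theorem card_le_of_fNum_eq_zero {A : Fin n → Set E} {k : ℕ} (h : fNum A k = 0)
    {σ : Finset (Fin n)} (hσ : (interOn A σ).Nonempty) : #σ ≤ k := by
  by_contra! hlt
  obtain ⟨ρ, hρσ, hρ⟩ := exists_subset_card_eq (Nat.succ_le_of_lt hlt)
  rw [fNum_eq_card_nerveFaces, card_eq_zero] at h
  exact notMem_empty ρ (h ▸ mem_nerveFaces.2 ⟨hρ, hσ.mono (interOn_anti A hρσ)⟩)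

end FaceNumbers

/-- **Theorem (main, b = 1).** Let `k ≥ 2` and let `𝒜 = {A_1, …, A_n}` be subsets of `ℝ²`
such that (i) `f_{k+1}(𝒜) = 0` and (ii) each `k`-wise and `(k+1)`-wise intersection is
empty, a single point, or both open and path-connected. Then
`f_k(𝒜) ≤ ((4k+1)/(4k²-7k+1)) · f_{k-1}^{ind}(𝒜)`. -/
theorem planar_upper_bound_path_connected (k n : ℕ) (hk : 2 ≤ k)
    (A : Fin n → Set (EuclideanSpace ℝ (Fin 2)))
    (h1 : fNum A (k + 1) = 0)
    (h2 : ∀ σ : Finset (Fin n), σ.card = k ∨ σ.card = k + 1 →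
      (⋂ i ∈ σ, A i) = ∅ ∨ (∃ p, (⋂ i ∈ σ, A i) = {p}) ∨
        (IsOpen (⋂ i ∈ σ, A i) ∧ IsPathConnected (⋂ i ∈ σ, A i))) :
    (fNum A k : ℝ) ≤ ((4 * k + 1 : ℝ) / (4 * (k : ℝ) ^ 2 - 7 * k + 1)) * fInd A (k - 1) := by
  have hA : IsPointOrOpenFamily A k :=
    { card_le := fun σ hσ => card_le_of_fNum_eq_zero h1 hσ
      subsingleton_or_isOpen := fun σ hσ => (h2 σ hσ).elim3
        (fun h => Or.inl (Set.subsingleton_empty.anti h.subset))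
        (fun ⟨_, h⟩ => Or.inl (Set.subsingleton_singleton.anti h.subset))
        (fun h => Or.inr ⟨h.1, h.2.isConnected.isPreconnected⟩) }
  have hcount := hA.mul_card_nerveFaces_le (by omega)
    ((EuclideanSpace.equiv (Fin 2) ℝ).toHomeomorph.trans Homeomorph.finTwoArrow)
  rw [← fNum_eq_card_nerveFaces, ← fInd_sub_one_eq_card_shadow A (by omega)] at hcount
  have hk' : (2 : ℝ) ≤ k := by exact_mod_cast hk
  have hpos : (0 : ℝ) < 4 * (k : ℝ) ^ 2 - 7 * k + 1 := by nlinarith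
  have hcount' : (4 * (k : ℝ) + 1) * ((k + 1) * fNum A k) ≤
      (4 * k + 1) * fInd A (k - 1) + 12 * k * fNum A k := by exact_mod_cast hcount
  rw [div_mul_eq_mul_div, le_div_iff₀ hpos]
  linarith
end
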